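/- The functional J attains its minimum over U = (𝓗₀¹(Ω) ∩ L^{2q}(Ω)) ∖ {0}: there exists z ∈ U with J(z) = inf{ J(u) : u ∈ U }; moreover the minimizer can be chosen nonnegative a.e. on Ω (since J(|u|) = J(u) for all u ∈ U). -/

import Mathlib

open MeasureTheory Set Filter

noncomputable section

/-- The open unit square `Ω = (0,1) × (0,1)` in `ℝ²`. -/
def Omega : Set (ℝ × ℝ) := Ioo (0:ℝ) 1 ×ˢ Ioo (0:ℝ) 1

/-- Test functions on a set `s`: smooth with compact support contained in `s`. -/
def IsTestOn (s : Set (ℝ × ℝ)) (φ : ℝ × ℝ → ℝ) : Prop :=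
  ContDiff ℝ (⊤ : ℕ∞) φ ∧ HasCompactSupport φ ∧ tsupport φ ⊆ s

/-- Classical partial derivative in the `x`-direction. -/
def pdx (φ : ℝ × ℝ → ℝ) (p : ℝ × ℝ) : ℝ := fderiv ℝ φ p (1, 0)

/-- Classical partial derivative in the `y`-direction. -/
def pdy (φ : ℝ × ℝ → ℝ) (p : ℝ × ℝ) : ℝ := fderiv ℝ φ p (0, 1)

/-- `g` is a weak `x`-partial derivative of `u` on `s`. -/
def HasWeakDerivXOn (s : Set (ℝ × ℝ)) (u g : ℝ × ℝ → ℝ) : Prop :=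
  LocallyIntegrableOn u s volume ∧ LocallyIntegrableOn g s volume ∧
  ∀ φ : ℝ × ℝ → ℝ, IsTestOn s φ →
    ∫ p in s, u p * pdx φ p = - ∫ p in s, g p * φ p

/-- `g` is a weak `y`-partial derivative of `u` on `s`. -/
def HasWeakDerivYOn (s : Set (ℝ × ℝ)) (u g : ℝ × ℝ → ℝ) : Prop :=
  LocallyIntegrableOn u s volume ∧ LocallyIntegrableOn g s volume ∧
  ∀ φ : ℝ × ℝ → ℝ, IsTestOn s φ →
    ∫ p in s, u p * pdy φ p = - ∫ p in s, g p * φ p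

/-- Test functions on `Ω`. -/
def IsTest (φ : ℝ × ℝ → ℝ) : Prop := IsTestOn Omega φ

/-- Membership in the weighted Sobolev space `𝓗¹(Ω)`, with weak derivatives `gx, gy`:
`u ∈ L²(Ω)`, `gx = ∂ₓu`, `gy = ∂_y u` weakly, and `y^α₁ gx, x^α₂ gy ∈ L²(Ω)`. -/
structure MemH1 (α₁ α₂ : ℝ) (u gx gy : ℝ × ℝ → ℝ) : Prop where
  memL2 : MemLp u 2 (volume.restrict Omega)
  weakX : HasWeakDerivXOn Omega u gx
  weakY : HasWeakDerivYOn Omega u gy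
  wgx : MemLp (fun p => p.2 ^ α₁ * gx p) 2 (volume.restrict Omega)
  wgy : MemLp (fun p => p.1 ^ α₂ * gy p) 2 (volume.restrict Omega)

/-- The `𝓗¹(Ω)` norm of `u` (with weak derivatives `gx, gy`). -/
def H1Norm (α₁ α₂ : ℝ) (u gx gy : ℝ × ℝ → ℝ) : ℝ :=
  Real.sqrt ((∫ p in Omega, (u p) ^ 2) +
    (∫ p in Omega, (p.2 ^ α₁ * gx p) ^ 2) +
    (∫ p in Omega, (p.1 ^ α₂ * gy p) ^ 2))

/-- Membership in `𝓗₀¹(Ω)`: member of `𝓗¹(Ω)` approximable in the `𝓗¹` norm by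
test functions. -/
def MemH10 (α₁ α₂ : ℝ) (u gx gy : ℝ × ℝ → ℝ) : Prop :=
  MemH1 α₁ α₂ u gx gy ∧
  ∀ ε : ℝ, 0 < ε → ∃ φ : ℝ × ℝ → ℝ, IsTest φ ∧
    H1Norm α₁ α₂ (fun p => u p - φ p) (fun p => gx p - pdx φ p)
      (fun p => gy p - pdy φ p) < ε

/-- Membership in `H₀(Ω) = {u ∈ 𝓗₀¹(Ω) : ∫_Ω V u² < ∞}`. -/
def MemH0 (α₁ α₂ : ℝ) (V u gx gy : ℝ × ℝ → ℝ) : Prop :=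
  MemH10 α₁ α₂ u gx gy ∧
  IntegrableOn (fun p => V p * (u p) ^ 2) Omega volume

/-- The bilinear form `a(u,v)` associated with the sub-elliptic operator with potential `V`. -/
def aForm (α₁ α₂ : ℝ) (V u gx gy v hx hy : ℝ × ℝ → ℝ) : ℝ :=
  ∫ p in Omega, ((p.2 ^ α₁ * gx p) * (p.2 ^ α₁ * hx p) +
    (p.1 ^ α₂ * gy p) * (p.1 ^ α₂ * hy p) + V p * u p * v p)

/-- The bilinear form `a₁(u,v)` (no potential). -/
def a1Form (α₁ α₂ : ℝ) (u gx gy v hx hy : ℝ × ℝ → ℝ) : ℝ :=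
  ∫ p in Omega, ((p.2 ^ α₁ * gx p) * (p.2 ^ α₁ * hx p) +
    (p.1 ^ α₂ * gy p) * (p.1 ^ α₂ * hy p))

/-- Membership in `S_p = {V ∈ L^p(Ω) : V ≥ 0 a.e., ‖V‖_{L^p(Ω)} ≤ M}`. -/
def MemSp (ppow M : ℝ) (V : ℝ × ℝ → ℝ) : Prop :=
  MemLp V (ENNReal.ofReal ppow) (volume.restrict Omega) ∧
  (∀ᵐ p ∂(volume.restrict Omega), 0 ≤ V p) ∧
  eLpNorm V (ENNReal.ofReal ppow) (volume.restrict Omega) ≤ ENNReal.ofReal M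

/-- `u` (with weak derivatives `gx, gy`) is an eigenfunction of the sub-elliptic operator
with potential `V` for the eigenvalue `lam`. -/
def IsEigenfun (α₁ α₂ : ℝ) (V : ℝ × ℝ → ℝ) (lam : ℝ) (u gx gy : ℝ × ℝ → ℝ) : Prop :=
  MemH0 α₁ α₂ V u gx gy ∧
  ∀ v hx hy : ℝ × ℝ → ℝ, MemH0 α₁ α₂ V v hx hy →
    aForm α₁ α₂ V u gx gy v hx hy = lam * ∫ p in Omega, u p * v p

/-- The first eigenvalue `λ₁(V) = inf { a(u,u) : u ∈ H₀(Ω), ‖u‖_{L²} = 1 }`. -/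
def lam1 (α₁ α₂ : ℝ) (V : ℝ × ℝ → ℝ) : ℝ :=
  sInf { r | ∃ u gx gy : ℝ × ℝ → ℝ, MemH0 α₁ α₂ V u gx gy ∧
    (∫ p in Omega, (u p) ^ 2) = 1 ∧ r = aForm α₁ α₂ V u gx gy u gx gy }

/-- `sup { a(u,u) : u ∈ span(φ), ‖u‖_{L²(Ω)} = 1 }` for a finite family `φ` with
weak derivatives `φx, φy`. -/
def rayleighSup (α₁ α₂ : ℝ) (V : ℝ × ℝ → ℝ) {k : ℕ} (φ φx φy : Fin k → ℝ × ℝ → ℝ) : ℝ :=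
  sSup { s | ∃ c : Fin k → ℝ,
    (∫ p in Omega, (∑ i, c i * φ i p) ^ 2) = 1 ∧
    s = aForm α₁ α₂ V (fun p => ∑ i, c i * φ i p) (fun p => ∑ i, c i * φx i p)
      (fun p => ∑ i, c i * φy i p) (fun p => ∑ i, c i * φ i p)
      (fun p => ∑ i, c i * φx i p) (fun p => ∑ i, c i * φy i p) }

/-- The set of values `sup { a(u,u) : u ∈ E, ‖u‖ = 1 }` over `k`-dimensional
subspaces `E` of `H₀(Ω)` (represented by `L²(Ω)`-linearly independent families of
`k` elements of `H₀(Ω)`). -/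
def minmaxSet (α₁ α₂ : ℝ) (V : ℝ × ℝ → ℝ) (k : ℕ) : Set ℝ :=
  { r | ∃ φ φx φy : Fin k → ℝ × ℝ → ℝ,
      (∀ i, MemH0 α₁ α₂ V (φ i) (φx i) (φy i)) ∧
      (∀ c : Fin k → ℝ, (∀ᵐ p ∂(volume.restrict Omega), ∑ i, c i * φ i p = 0) → c = 0) ∧
      r = rayleighSup α₁ α₂ V φ φx φy }

/-- The `k`-th eigenvalue via the min-max principle. -/
def lamk (α₁ α₂ : ℝ) (V : ℝ × ℝ → ℝ) (k : ℕ) : ℝ := sInf (minmaxSet α₁ α₂ V k)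

/-- Membership in `U = (𝓗₀¹(Ω) ∩ L^{2q}(Ω)) \ {0}`. -/
def MemU (α₁ α₂ qe : ℝ) (u gx gy : ℝ × ℝ → ℝ) : Prop :=
  MemH10 α₁ α₂ u gx gy ∧
  MemLp u (ENNReal.ofReal (2 * qe)) (volume.restrict Omega) ∧
  ¬ (∀ᵐ p ∂(volume.restrict Omega), u p = 0)

/-- The functional `J(u) = (a₁(u,u) + M ‖u‖_{L^{2q}(Ω)}²) / ‖u‖_{L²(Ω)}²`. -/
def Jfun (α₁ α₂ M qe : ℝ) (u gx gy : ℝ × ℝ → ℝ) : ℝ :=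
  (a1Form α₁ α₂ u gx gy u gx gy +
    M * (∫ p in Omega, |u p| ^ (2 * qe)) ^ (1 / qe)) / (∫ p in Omega, (u p) ^ 2)

open Topology


lemma weak_subseq {H : Type*} [NormedAddCommGroup H] [InnerProductSpace ℝ H] [CompleteSpace H]
    [TopologicalSpace.SeparableSpace H] (x : ℕ → H) (R : ℝ) (hx : ∀ n, ‖x n‖ ≤ R) :
    ∃ (y : H) (σ : ℕ → ℕ), StrictMono σ ∧
      ∀ w, Tendsto (fun n => inner ℝ (x (σ n)) w) atTop (𝓝 (inner ℝ y w)) := by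
  have hc := WeakDual.isSeqCompact_closedBall ℝ H 0 R
  let f : ℕ → WeakDual ℝ H := fun n =>
    StrongDual.toWeakDual (InnerProductSpace.toDual ℝ H (x n))
  have hf : ∀ n, f n ∈ (WeakDual.toStrongDual ⁻¹' Metric.closedBall (0 : StrongDual ℝ H) R) := by
    intro n
    simp only [mem_preimage, mem_closedBall_zero_iff, f]
    have : ‖InnerProductSpace.toDual ℝ H (x n)‖ ≤ R := by
      rw [LinearIsometryEquiv.norm_map]; exact hx n
    exact this
  obtain ⟨g, hg, σ, hσ, hlim⟩ := hc hf
  refine ⟨(InnerProductSpace.toDual ℝ H).symm (WeakDual.toStrongDual g), σ, hσ, ?_⟩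
  intro w
  have h1 := ((WeakDual.eval_continuous (𝕜 := ℝ) (E := H) w).tendsto g).comp hlim
  rw [InnerProductSpace.toDual_symm_apply]
  refine h1.congr ?_
  intro n
  simp [f]
  

abbrev muO : Measure (ℝ × ℝ) := volume.restrict Omega

lemma isOpen_Omega : IsOpen Omega := isOpen_Ioo.prod isOpen_Ioo
lemma meas_Omega : MeasurableSet Omega := isOpen_Omega.measurableSet

lemma vol_Omega : volume Omega = 1 := by
  unfold Omega
  rw [Measure.volume_eq_prod, Measure.prod_prod]
  simp

instance : IsFiniteMeasure muO := ⟨by simp [muO, vol_Omega]⟩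

lemma muO_eq : muO = (volume.restrict (Ioo (0:ℝ) 1)).prod (volume.restrict (Ioo (0:ℝ) 1)) := by
  unfold muO Omega
  rw [Measure.volume_eq_prod, Measure.prod_restrict]

lemma rpow_memL2 {α : ℝ} (h : α ∈ Ioo (0:ℝ) (1/2)) :
    MemLp (fun x : ℝ => x ^ (-α)) 2 (volume.restrict (Ioo (0:ℝ) 1)) := by
  rw [memLp_two_iff_integrable_sq (by fun_prop)]
  have : IntegrableOn (fun x : ℝ => x ^ (-(2*α))) (Ioo (0:ℝ) 1) := by
    rw [intervalIntegral.integrableOn_Ioo_rpow_iff one_pos]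
    linarith [h.2]
  refine this.congr_fun ?_ measurableSet_Ioo
  intro x hx
  simp only
  rw [← Real.rpow_natCast, ← Real.rpow_mul hx.1.le]
  congr 1; push_cast; ring

/-- weight conditions -/
structure GoodW (w : ℝ × ℝ → ℝ) : Prop where
  meas : Measurable w
  pos : ∀ p ∈ Omega, 0 < w p
  le : ∀ p ∈ Omega, w p ≤ 1
  inv : MemLp (fun p => (w p)⁻¹) 2 muO

lemma goodW_y {α : ℝ} (h : α ∈ Ioo (0:ℝ) (1/2)) : GoodW (fun p => p.2 ^ α) where
  meas := by fun_prop
  pos := fun p hp => Real.rpow_pos_of_pos hp.2.1 _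
  le := fun p hp => Real.rpow_le_one hp.2.1.le hp.2.2.le h.1.le
  inv := by
    have := (rpow_memL2 h).comp_snd (volume.restrict (Ioo (0:ℝ) 1))
    rw [← muO_eq] at this
    refine this.ae_eq ?_
    filter_upwards [ae_restrict_mem meas_Omega] with p hp
    simp [Real.rpow_neg hp.2.1.le]

lemma goodW_x {α : ℝ} (h : α ∈ Ioo (0:ℝ) (1/2)) : GoodW (fun p => p.1 ^ α) where
  meas := by fun_prop
  pos := fun p hp => Real.rpow_pos_of_pos hp.1.1 _
  le := fun p hp => Real.rpow_le_one hp.1.1.le hp.1.2.le h.1.le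
  inv := by
    have := (rpow_memL2 h).comp_fst (volume.restrict (Ioo (0:ℝ) 1))
    rw [← muO_eq] at this
    refine this.ae_eq ?_
    filter_upwards [ae_restrict_mem meas_Omega] with p hp
    simp [Real.rpow_neg hp.1.1.le]

lemma test_cont {φ} (h : IsTest φ) : Continuous φ := h.1.continuous

lemma test_dcont {φ} (h : IsTest φ) (d : ℝ × ℝ) : Continuous (fun p => fderiv ℝ φ p d) := by
  exact (h.1.continuous_fderiv (by simp)).clm_apply continuous_const

lemma test_dcs {φ} (h : IsTest φ) (d : ℝ × ℝ) :
    HasCompactSupport (fun p => fderiv ℝ φ p d) := by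
  exact (h.2.1.fderiv_apply ℝ d)

lemma test_zero {φ} (h : IsTest φ) {p} (hp : p ∉ Omega) : φ p = 0 :=
  image_eq_zero_of_notMem_tsupport (fun hh => hp (h.2.2 hh))

lemma test_dzero {φ} (h : IsTest φ) (d : ℝ × ℝ) {p} (hp : p ∉ Omega) : fderiv ℝ φ p d = 0 := by
  have : fderiv ℝ φ p = 0 :=
    image_eq_zero_of_notMem_tsupport (fun hh => hp (h.2.2 (tsupport_fderiv_subset ℝ hh)))
  simp [this]

lemma test_memLp {φ} (h : IsTest φ) (r : ENNReal) : MemLp φ r muO :=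
  ((test_cont h).memLp_of_hasCompactSupport h.2.1).restrict _

lemma test_dmemLp {φ} (h : IsTest φ) (d : ℝ × ℝ) (r : ENNReal) :
    MemLp (fun p => fderiv ℝ φ p d) r muO :=
  ((test_dcont h d).memLp_of_hasCompactSupport (test_dcs h d)).restrict _

lemma test_wmemLp {φ} (h : IsTest φ) (d : ℝ × ℝ) {w} (hw : GoodW w) :
    MemLp (fun p => w p * fderiv ℝ φ p d) 2 muO := by
  refine (test_dmemLp h d 2).of_le
    (hw.meas.aestronglyMeasurable.mul (test_dcont h d).aestronglyMeasurable) ?_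
  filter_upwards [ae_restrict_mem meas_Omega] with p hp
  rw [norm_mul]
  have : ‖w p‖ ≤ 1 := by
    rw [Real.norm_of_nonneg (hw.pos p hp).le]; exact hw.le p hp
  nlinarith [norm_nonneg (fderiv ℝ φ p d)]

lemma test_bdd {φ} (h : IsTest φ) : ∃ C, ∀ p, ‖φ p‖ ≤ C :=
  (test_cont h).bounded_above_of_compact_support h.2.1 

lemma test_winv {φ} (h : IsTest φ) {w} (hw : GoodW w) :
    MemLp (fun p => (w p)⁻¹ * φ p) 2 muO := by
  obtain ⟨C, hC⟩ := test_bdd h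
  refine (hw.inv.const_mul C).of_le
    (hw.meas.inv.aestronglyMeasurable.mul (test_cont h).aestronglyMeasurable) ?_
  refine Eventually.of_forall fun p => ?_
  rw [norm_mul, norm_mul]
  have h1 : ‖φ p‖ ≤ ‖C‖ := (hC p).trans (le_abs_self C)
  nlinarith [norm_nonneg (w p)⁻¹]

lemma test_add {φ ψ} (h : IsTest φ) (h' : IsTest ψ) : IsTest (fun p => φ p + ψ p) :=
  ⟨h.1.add h'.1, h.2.1.add h'.2.1, (tsupport_add _ _).trans (union_subset h.2.2 h'.2.2)⟩

lemma test_comp {φ} (h : IsTest φ) {f : ℝ → ℝ} (hf : ContDiff ℝ (⊤ : ℕ∞) f) (h0 : f 0 = 0) :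
    IsTest (fun p => f (φ p)) :=
  ⟨hf.comp h.1, h.2.1.comp_left h0, (closure_mono (fun p hp => by
    simp only [Function.mem_support] at hp ⊢
    intro hh; rw [hh] at hp; exact hp h0)).trans h.2.2⟩

lemma test_smul {φ} (h : IsTest φ) (c : ℝ) : IsTest (fun p => c * φ p) :=
  test_comp (f := fun t => c * t) h (by fun_prop) (by simp)

lemma test_sub {φ ψ} (h : IsTest φ) (h' : IsTest ψ) : IsTest (fun p => φ p - ψ p) := by
  have := test_add h (test_smul h' (-1))
  convert this using 2; ring

lemma test_diff {φ} (h : IsTest φ) : Differentiable ℝ φ := h.1.differentiable (by simp)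

lemma test_parts {φ ψ} (h : IsTest φ) (h' : IsTest ψ) (d : ℝ × ℝ) :
    ∫ p in Omega, φ p * fderiv ℝ ψ p d = - ∫ p in Omega, fderiv ℝ φ p d * ψ p := by
  rw [setIntegral_eq_integral_of_forall_compl_eq_zero, setIntegral_eq_integral_of_forall_compl_eq_zero]
  · apply integral_mul_fderiv_eq_neg_fderiv_mul_of_integrable
    · exact ((test_dcont h d).mul (test_cont h')).integrable_of_hasCompactSupport
        (h'.2.1.mul_left)
    · exact ((test_cont h).mul (test_dcont h' d)).integrable_of_hasCompactSupport
        (h.2.1.mul_right)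
    · exact ((test_cont h).mul (test_cont h')).integrable_of_hasCompactSupport
        (h.2.1.mul_right)
    · exact fun x _ => test_diff h x
    · exact fun x _ => test_diff h' x
  · intro p hp; simp [test_zero h' hp]
  · intro p hp; simp [test_zero h hp]


lemma transl {φ} (h : IsTest φ) (v : ℝ × ℝ) :
    ∫⁻ p, ‖φ (p + v) - φ p‖ₑ ≤ ∫⁻ p, ‖fderiv ℝ φ p v‖ₑ := by
  have key : ∀ p, ‖φ (p + v) - φ p‖ₑ ≤
      ∫⁻ r in Ioc (0:ℝ) 1, ‖fderiv ℝ φ (p + r • v) v‖ₑ := by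
    intro p
    have hd : ∀ r ∈ uIcc (0:ℝ) 1, HasDerivAt (fun r : ℝ => φ (p + r • v))
        (fderiv ℝ φ (p + r • v) v) r := by
      intro r _
      have h1 : HasDerivAt (fun r : ℝ => p + r • v) v r := by
        simpa using ((hasDerivAt_id r).smul_const v).const_add p
      exact ((test_diff h _).hasFDerivAt).comp_hasDerivAt r h1
    have hc : Continuous (fun r : ℝ => fderiv ℝ φ (p + r • v) v) :=
      (test_dcont h v).comp (by fun_prop)
    have := intervalIntegral.integral_eq_sub_of_hasDerivAt hd (hc.intervalIntegrable 0 1)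
    simp only [one_smul, zero_smul, add_zero] at this
    rw [← this, intervalIntegral.integral_of_le zero_le_one]
    exact enorm_integral_le_lintegral_enorm _
  calc ∫⁻ p, ‖φ (p + v) - φ p‖ₑ
      ≤ ∫⁻ p, ∫⁻ r in Ioc (0:ℝ) 1, ‖fderiv ℝ φ (p + r • v) v‖ₑ := lintegral_mono key
    _ = ∫⁻ r in Ioc (0:ℝ) 1, ∫⁻ p, ‖fderiv ℝ φ (p + r • v) v‖ₑ := by
        apply lintegral_lintegral_swap
        apply Measurable.aemeasurable
        have : Continuous (fun z : (ℝ × ℝ) × ℝ => fderiv ℝ φ (z.1 + z.2 • v) v) :=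
          (test_dcont h v).comp (by fun_prop)
        exact this.measurable.enorm
    _ = ∫⁻ r in Ioc (0:ℝ) 1, ∫⁻ p, ‖fderiv ℝ φ p v‖ₑ := by
        congr 1; ext r
        exact lintegral_add_right_eq_self (fun p => ‖fderiv ℝ φ p v‖ₑ) (r • v)
    _ = _ := by simp

def Qs (h : ℝ) : Set (ℝ × ℝ) := Icc (0:ℝ) h ×ˢ Icc (0:ℝ) h

lemma vol_Qs (h : ℝ) : volume (Qs h) = ENNReal.ofReal h * ENNReal.ofReal h := by
  unfold Qs
  rw [Measure.volume_eq_prod, Measure.prod_prod]; simp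

lemma meas_Qs (h : ℝ) : MeasurableSet (Qs h) := measurableSet_Icc.prod measurableSet_Icc

lemma transl_Q {φ} (hφ : IsTest φ) {K : ENNReal} (hx : ∫⁻ p, ‖pdx φ p‖ₑ ≤ K)
    (hy : ∫⁻ p, ‖pdy φ p‖ₑ ≤ K) {h : ℝ} {s : ℝ × ℝ} (hs : s ∈ Qs h) :
    ∫⁻ p, ‖φ (p + s) - φ p‖ₑ ≤ ENNReal.ofReal h * (2 * K) := by
  refine (transl hφ s).trans ?_
  have h1 : ∀ p, ‖fderiv ℝ φ p s‖ₑ ≤ ENNReal.ofReal h * ‖pdx φ p‖ₑ + ENNReal.ofReal h * ‖pdy φ p‖ₑ := by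
    intro p
    have e : fderiv ℝ φ p s = s.1 * pdx φ p + s.2 * pdy φ p := by
      unfold pdx pdy
      rw [← smul_eq_mul, ← smul_eq_mul, ← map_smul, ← map_smul, ← map_add]
      congr 1; ext <;> simp
    rw [e]
    refine (enorm_add_le _ _).trans ?_
    rw [enorm_mul, enorm_mul]
    have a1 : ‖s.1‖ₑ ≤ ENNReal.ofReal h := by
      rw [Real.enorm_of_nonneg hs.1.1]; exact ENNReal.ofReal_le_ofReal hs.1.2
    have a2 : ‖s.2‖ₑ ≤ ENNReal.ofReal h := by
      rw [Real.enorm_of_nonneg hs.2.1]; exact ENNReal.ofReal_le_ofReal hs.2.2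
    gcongr
  refine (lintegral_mono h1).trans ?_
  have m1 : Measurable (fun p => ‖pdx φ p‖ₑ) := (test_dcont hφ (1,0)).measurable.enorm
  have m2 : Measurable (fun p => ‖pdy φ p‖ₑ) := (test_dcont hφ (0,1)).measurable.enorm
  rw [lintegral_add_left (m1.const_mul _), lintegral_const_mul _ m1, lintegral_const_mul _ m2,
    ← mul_add, two_mul]
  gcongr

lemma avg {D} (hD : IsTest D) {K : ENNReal} (hx : ∫⁻ p, ‖pdx D p‖ₑ ≤ K)
    (hy : ∫⁻ p, ‖pdy D p‖ₑ ≤ K) (h : ℝ) :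
    volume (Qs h) * ∫⁻ p, ‖D p‖ₑ ∂muO ≤ volume (Qs h) * (ENNReal.ofReal h * (2 * K)) +
      ∫⁻ p, ‖∫ s in Qs h, D (p + s)‖ₑ ∂muO := by
  have fin : volume (Qs h) ≠ ⊤ := by rw [vol_Qs]; finiteness
  have hcK : IsCompact (Qs h) := isCompact_Icc.prod isCompact_Icc
  have c2 : Continuous (fun z : (ℝ × ℝ) × (ℝ × ℝ) => D (z.1 + z.2) - D z.1) := by
    have := test_cont hD
    fun_prop
  have key : ∀ p, volume (Qs h) * ‖D p‖ₑ ≤ (∫⁻ s in Qs h, ‖D (p + s) - D p‖ₑ) +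
      ‖∫ s in Qs h, D (p + s)‖ₑ := by
    intro p
    have cc : Continuous (fun s => D (p + s)) := (test_cont hD).comp (by fun_prop)
    have i1 : IntegrableOn (fun s => D (p + s)) (Qs h) := cc.continuousOn.integrableOn_compact hcK
    have e : ∫ s in Qs h, (D (p + s) - D p) = (∫ s in Qs h, D (p + s)) - (volume (Qs h)).toReal * D p := by
      rw [integral_sub i1 (integrableOn_const fin), setIntegral_const]; simp [Measure.real]
    have e2 : volume (Qs h) * ‖D p‖ₑ = ‖(volume (Qs h)).toReal * D p‖ₑ := by
      rw [enorm_mul, Real.enorm_of_nonneg ENNReal.toReal_nonneg, ENNReal.ofReal_toReal fin]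
    have e3 : (volume (Qs h)).toReal * D p = (∫ s in Qs h, D (p + s)) - ∫ s in Qs h, (D (p + s) - D p) := by
      rw [e]; ring
    rw [e2, e3, add_comm]
    refine (enorm_sub_le).trans ?_
    gcongr
    exact enorm_integral_le_lintegral_enorm _
  have m0 : Measurable (fun p => ‖D p‖ₑ) := (test_cont hD).measurable.enorm
  have m1 : Measurable (fun p => ∫⁻ s in Qs h, ‖D (p + s) - D p‖ₑ) :=
    Measurable.lintegral_prod_right c2.measurable.enorm
  rw [← lintegral_const_mul _ m0]
  refine (lintegral_mono key).trans ?_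
  rw [lintegral_add_left m1]
  gcongr
  calc ∫⁻ p, (∫⁻ s in Qs h, ‖D (p + s) - D p‖ₑ) ∂muO
      ≤ ∫⁻ p, (∫⁻ s in Qs h, ‖D (p + s) - D p‖ₑ) := lintegral_mono' Measure.restrict_le_self le_rfl
    _ = ∫⁻ s in Qs h, ∫⁻ p, ‖D (p + s) - D p‖ₑ :=
        lintegral_lintegral_swap c2.measurable.enorm.aemeasurable
    _ ≤ ∫⁻ s in Qs h, ENNReal.ofReal h * (2 * K) := by
        apply setLIntegral_mono' (meas_Qs h)
        intro s hs
        exact transl_Q hD hx hy hs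
    _ = _ := by rw [setLIntegral_const, mul_comm]

lemma L1cauchy {φ : ℕ → ℝ × ℝ → ℝ} (hφ : ∀ n, IsTest (φ n)) {K : ENNReal} (hK : K ≠ ⊤)
    (hx : ∀ n, ∫⁻ p, ‖pdx (φ n) p‖ₑ ≤ K) (hy : ∀ n, ∫⁻ p, ‖pdy (φ n) p‖ₑ ≤ K)
    (h0 : ∀ n, ∫⁻ p, ‖φ n p‖ₑ ≤ K)
    (hw : ∀ h : ℝ, ∀ p, ∃ a, Tendsto (fun n => ∫ s in Qs h, φ n (p + s)) atTop (𝓝 a)) :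
    ∀ ε : ENNReal, ε ≠ 0 → ε ≠ ⊤ → ∃ N, ∀ m ≥ N, ∀ n ≥ N, ∫⁻ p, ‖φ m p - φ n p‖ₑ ∂muO ≤ ε := by
  intro ε hε hε'
  obtain ⟨h, hpos, hh⟩ : ∃ h : ℝ, 0 < h ∧ ENNReal.ofReal h * (2 * (2 * K)) ≤ ε / 2 := by
    refine ⟨(ε/2).toReal / ((2 * (2 * K)).toReal + 1), ?_, ?_⟩
    · have : 0 < (ε/2).toReal := ENNReal.toReal_pos (by simp [hε]) (by finiteness)
      positivity
    · rw [← ENNReal.ofReal_toReal (a := 2 * (2 * K)) (by finiteness),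
        ← ENNReal.ofReal_mul (by positivity), ← ENNReal.ofReal_toReal (a := ε/2) (by finiteness)]
      apply ENNReal.ofReal_le_ofReal
      rw [ENNReal.toReal_ofReal (by positivity), ENNReal.toReal_ofReal (by positivity)]
      rw [div_mul_eq_mul_div, div_le_iff₀ (by positivity)]
      have : 0 ≤ (ε/2).toReal := by positivity
      nlinarith
  choose a ha using hw h
  set A : ℕ → ℝ × ℝ → ℝ := fun n p => ∫ s in Qs h, φ n (p + s) with hA
  have mA : ∀ n, Measurable (A n) := by
    intro n
    have c2 : Continuous (fun z : (ℝ × ℝ) × (ℝ × ℝ) => φ n (z.1 + z.2)) :=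
      (test_cont (hφ n)).comp (by fun_prop)
    exact (c2.stronglyMeasurable.integral_prod_right (ν := volume.restrict (Qs h))).measurable
  have ma : Measurable a := measurable_of_tendsto_metrizable mA (tendsto_pi_nhds.2 ha)
  have bA : ∀ n p, ‖A n p‖ₑ ≤ K := by
    intro n p
    refine (enorm_integral_le_lintegral_enorm _).trans ?_
    refine (lintegral_mono' Measure.restrict_le_self le_rfl).trans ?_
    rw [lintegral_add_left_eq_self (fun s => ‖φ n s‖ₑ) p]
    exact h0 n
  have ba : ∀ p, ‖a p‖ₑ ≤ K := fun p =>
    le_of_tendsto ((ha p).enorm) (Eventually.of_forall fun n => bA n p)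
  have lim : Tendsto (fun n => ∫⁻ p, ‖A n p - a p‖ₑ ∂muO) atTop (𝓝 0) := by
    have := tendsto_lintegral_of_dominated_convergence (μ := muO)
      (F := fun n p => ‖A n p - a p‖ₑ) (f := fun _ => 0) (fun _ => K + K)
      (fun n => ((mA n).sub ma).enorm)
      (fun n => Eventually.of_forall fun p => enorm_sub_le.trans (add_le_add (bA n p) (ba p)))
      (by rw [lintegral_const]; finiteness)
      (Eventually.of_forall fun p => by
        have := ((ha p).sub_const (a p)).enorm
        simpa using this)
    simpa using this
  have vpos : volume (Qs h) ≠ 0 := by rw [vol_Qs]; simp [hpos]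
  have vfin : volume (Qs h) ≠ ⊤ := by rw [vol_Qs]; finiteness
  have bpos : (0:ENNReal) < volume (Qs h) * (ε / 2 / 2) :=
    ENNReal.mul_pos vpos (by simp [ENNReal.div_eq_zero_iff, hε])
  have ev := lim.eventually_le_const bpos
  obtain ⟨N, hN⟩ := eventually_atTop.1 ev
  refine ⟨N, fun m hm n hn => ?_⟩
  have hcK : IsCompact (Qs h) := isCompact_Icc.prod isCompact_Icc
  have tD := test_sub (hφ m) (hφ n)
  have gx : ∀ (d : ℝ × ℝ), (∀ n, ∫⁻ p, ‖fderiv ℝ (φ n) p d‖ₑ ≤ K) →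
      ∫⁻ p, ‖fderiv ℝ (fun p => φ m p - φ n p) p d‖ₑ ≤ 2 * K := by
    intro d hd
    rw [two_mul]
    refine le_trans ?_ (add_le_add (hd m) (hd n))
    rw [← lintegral_add_left (test_dcont (hφ m) d).measurable.enorm]
    apply lintegral_mono
    intro p
    simp only
    rw [fderiv_fun_sub (test_diff (hφ m) p) (test_diff (hφ n) p)]
    exact enorm_sub_le
  have := avg tD (gx (1,0) hx) (gx (0,1) hy) h
  rw [← ENNReal.mul_le_mul_iff_right vpos vfin]
  refine this.trans ?_
  have t2 : ∫⁻ p, ‖∫ s in Qs h, (φ m (p + s) - φ n (p + s))‖ₑ ∂muO ≤ volume (Qs h) * (ε / 2) := by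
    calc _ ≤ ∫⁻ p, (‖A m p - a p‖ₑ + ‖A n p - a p‖ₑ) ∂muO := by
          apply lintegral_mono
          intro p
          simp only
          have i1 : ∀ n, IntegrableOn (fun s => φ n (p + s)) (Qs h) := fun n =>
            ((test_cont (hφ n)).comp (continuous_const.add continuous_id)).continuousOn.integrableOn_compact hcK
          rw [integral_sub (i1 m) (i1 n)]
          have : A m p - A n p = (A m p - a p) - (A n p - a p) := by ring
          change ‖A m p - A n p‖ₑ ≤ _
          rw [this]
          exact enorm_sub_le
      _ ≤ volume (Qs h) * (ε / 2 / 2) + volume (Qs h) * (ε / 2 / 2) := by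
          have mm : Measurable (fun p => ‖A m p - a p‖ₑ) := ((mA m).sub ma).enorm
          rw [lintegral_add_left mm]
          exact add_le_add (hN m hm) (hN n hn)
      _ = _ := by
          rw [← mul_add]; congr 1
          exact ENNReal.add_halves (ε/2)
  calc _ ≤ volume (Qs h) * (ε / 2) + volume (Qs h) * (ε / 2) := by gcongr
    _ = _ := by rw [← mul_add, ENNReal.add_halves]


abbrev E3 := EuclideanSpace ℝ (Fin 3)
abbrev XX := Lp E3 2 muO

def v3 (a b c : ℝ × ℝ → ℝ) : ℝ × ℝ → E3 := fun p => !₂[a p, b p, c p]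

lemma memLp_v3 {a b c : ℝ × ℝ → ℝ} (ha : MemLp a 2 muO) (hb : MemLp b 2 muO) (hc : MemLp c 2 muO) :
    MemLp (v3 a b c) 2 muO := by
  rw [memLp_piLp_iff]
  intro i
  fin_cases i
  · exact ha
  · exact hb
  · exact hc

lemma comp_memLp (x : XX) (i : Fin 3) : MemLp (fun p => x p i) 2 muO :=
  memLp_piLp_iff.1 (Lp.memLp x) i

lemma inner_v3 {a b c : ℝ × ℝ → ℝ} (h : MemLp (v3 a b c) 2 muO) (x : XX) :
    inner ℝ x (h.toLp _) = ∫ p, (x p 0 * a p + x p 1 * b p + x p 2 * c p) ∂muO := by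
  rw [L2.inner_def]
  apply integral_congr_ae
  filter_upwards [h.coeFn_toLp] with p hp
  rw [hp]
  simp [v3, PiLp.inner_apply, Fin.sum_univ_three]
  ring

lemma inner_v3v3 {a b c a' b' c' : ℝ × ℝ → ℝ} (h : MemLp (v3 a b c) 2 muO)
    (h' : MemLp (v3 a' b' c') 2 muO) :
    inner ℝ (h'.toLp _) (h.toLp _) = ∫ p, (a' p * a p + b' p * b p + c' p * c p) ∂muO := by
  rw [inner_v3]
  apply integral_congr_ae
  filter_upwards [h'.coeFn_toLp] with p hp
  rw [hp]
  simp [v3]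

lemma norm_v3 {a b c : ℝ × ℝ → ℝ} (h : MemLp (v3 a b c) 2 muO) :
    ‖h.toLp _‖ ^ 2 = ∫ p, (a p ^ 2 + b p ^ 2 + c p ^ 2) ∂muO := by
  rw [← real_inner_self_eq_norm_sq, inner_v3v3]
  congr 1; ext p; ring

lemma norm_v3' {a b c : ℝ × ℝ → ℝ} (ha : MemLp a 2 muO) (hb : MemLp b 2 muO) (hc : MemLp c 2 muO) :
    ‖(memLp_v3 ha hb hc).toLp _‖ ^ 2 =
      (∫ p, a p ^ 2 ∂muO) + (∫ p, b p ^ 2 ∂muO) + ∫ p, c p ^ 2 ∂muO := by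
  rw [norm_v3]
  have i : Integrable (fun p => a p ^ 2 + b p ^ 2) muO := ha.integrable_sq.add hb.integrable_sq
  rw [integral_add i hc.integrable_sq, integral_add ha.integrable_sq hb.integrable_sq]

lemma memLp_tvec {φ} (h : IsTest φ) {w₁ w₂ : ℝ × ℝ → ℝ} (h₁ : GoodW w₁) (h₂ : GoodW w₂) :
    MemLp (v3 φ (fun p => w₁ p * pdx φ p) (fun p => w₂ p * pdy φ p)) 2 muO :=
  memLp_v3 (test_memLp h 2) (test_wmemLp h (1,0) h₁) (test_wmemLp h (0,1) h₂)

def TT {w₁ w₂ : ℝ × ℝ → ℝ} (h₁ : GoodW w₁) (h₂ : GoodW w₂) : Submodule ℝ XX where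
  carrier := {x | ∃ φ, ∃ h : IsTest φ, x = (memLp_tvec h h₁ h₂).toLp _}
  add_mem' := by
    rintro x y ⟨φ, h, rfl⟩ ⟨ψ, h', rfl⟩
    refine ⟨_, test_add h h', ?_⟩
    rw [← MemLp.toLp_add]
    apply MemLp.toLp_congr
    refine Eventually.of_forall fun p => ?_
    ext i
    have e : ∀ d, fderiv ℝ (fun p => φ p + ψ p) p d = fderiv ℝ φ p d + fderiv ℝ ψ p d := by
      intro d; rw [fderiv_fun_add (test_diff h p) (test_diff h' p)]; simp
    fin_cases i <;> simp [v3, pdx, pdy, e, mul_add]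
  zero_mem' := by
    have h0 : IsTest (fun _ => (0:ℝ)) := by
      refine ⟨contDiff_const, ?_, ?_⟩
      · exact HasCompactSupport.zero
      · simp [tsupport]
    refine ⟨_, h0, ?_⟩
    symm
    rw [← MemLp.toLp_zero (MemLp.zero : MemLp (0 : ℝ × ℝ → E3) 2 muO)]
    apply MemLp.toLp_congr
    refine Eventually.of_forall fun p => ?_
    ext i
    fin_cases i <;> simp [v3, pdx, pdy]
  smul_mem' := by
    rintro c x ⟨φ, h, rfl⟩
    refine ⟨_, test_smul h c, ?_⟩
    rw [← MemLp.toLp_const_smul]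
    apply MemLp.toLp_congr
    refine Eventually.of_forall fun p => ?_
    ext i
    have e : ∀ d, fderiv ℝ (fun p => c * φ p) p d = c * fderiv ℝ φ p d := by
      intro d; rw [fderiv_const_mul (test_diff h p)]; simp
    fin_cases i <;> simp [v3, pdx, pdy, e] <;> ring

lemma int2 {f g : ℝ × ℝ → ℝ} (hf : MemLp f 2 muO) (hg : MemLp g 2 muO) :
    Integrable (fun p => f p * g p) muO := hf.integrable_mul hg

lemma test_wparts {φ ψ} (h : IsTest φ) (h' : IsTest ψ) (d : ℝ × ℝ) {w} (hw : GoodW w) :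
    ∫ p, (φ p * fderiv ℝ ψ p d + (w p * fderiv ℝ φ p d) * ((w p)⁻¹ * ψ p)) ∂muO = 0 := by
  have : ∫ p, (φ p * fderiv ℝ ψ p d + (w p * fderiv ℝ φ p d) * ((w p)⁻¹ * ψ p)) ∂muO
      = ∫ p, (φ p * fderiv ℝ ψ p d + fderiv ℝ φ p d * ψ p) ∂muO := by
    apply integral_congr_ae
    filter_upwards [ae_restrict_mem meas_Omega] with p hp
    have := (hw.pos p hp).ne'
    field_simp
  rw [this, integral_add (int2 (test_memLp h 2) (test_dmemLp h' d 2))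
    (int2 (test_dmemLp h d 2) (test_memLp h' 2)), test_parts h h' d]
  simp

section
variable {w₁ w₂ : ℝ × ℝ → ℝ} (h₁ : GoodW w₁) (h₂ : GoodW w₂)

lemma closed_id {x : XX} (hx : x ∈ (TT h₁ h₂).topologicalClosure) (g : XX)
    (hg : ∀ y ∈ TT h₁ h₂, inner ℝ y g = 0) : inner ℝ x g = 0 := by
  have hcl : IsClosed {y : XX | inner ℝ y g = 0} :=
    isClosed_eq (by fun_prop) continuous_const
  exact closure_minimal (fun y hy => hg y hy) hcl hx

lemma weakX {x : XX} (hx : x ∈ (TT h₁ h₂).topologicalClosure) {ψ} (hψ : IsTest ψ) :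
    ∫ p in Omega, x p 0 * pdx ψ p = - ∫ p in Omega, ((w₁ p)⁻¹ * x p 1) * ψ p := by
  have mg : MemLp (v3 (pdx ψ) (fun p => (w₁ p)⁻¹ * ψ p) (fun _ => 0)) 2 muO :=
    memLp_v3 (test_dmemLp hψ (1,0) 2) (test_winv hψ h₁) MemLp.zero
  have := closed_id h₁ h₂ hx (mg.toLp _) (by
    rintro y ⟨φ, h, rfl⟩
    rw [inner_v3v3]
    simpa [pdx] using test_wparts h hψ (1,0) h₁)
  rw [inner_v3] at this
  simp only [mul_zero, add_zero] at this
  rw [integral_add (int2 (comp_memLp x 0) (show MemLp (pdx ψ) 2 muO from test_dmemLp hψ (1,0) 2))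
    (int2 (comp_memLp x 1) (test_winv hψ h₁))] at this
  rw [eq_neg_iff_add_eq_zero, ← this]
  congr 2; ext p; ring

lemma weakY {x : XX} (hx : x ∈ (TT h₁ h₂).topologicalClosure) {ψ} (hψ : IsTest ψ) :
    ∫ p in Omega, x p 0 * pdy ψ p = - ∫ p in Omega, ((w₂ p)⁻¹ * x p 2) * ψ p := by
  have mg : MemLp (v3 (pdy ψ) (fun _ => 0) (fun p => (w₂ p)⁻¹ * ψ p)) 2 muO :=
    memLp_v3 (test_dmemLp hψ (0,1) 2) MemLp.zero (test_winv hψ h₂)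
  have := closed_id h₁ h₂ hx (mg.toLp _) (by
    rintro y ⟨φ, h, rfl⟩
    rw [inner_v3v3]
    simpa [pdy] using test_wparts h hψ (0,1) h₂)
  rw [inner_v3] at this
  simp only [mul_zero, add_zero] at this
  rw [integral_add (int2 (comp_memLp x 0) (show MemLp (pdy ψ) 2 muO from test_dmemLp hψ (0,1) 2))
    (int2 (comp_memLp x 2) (test_winv hψ h₂))] at this
  rw [eq_neg_iff_add_eq_zero, ← this]
  congr 2; ext p; ring
end

lemma loc_int {f : ℝ × ℝ → ℝ} (hf : Integrable f muO) : LocallyIntegrableOn f Omega volume :=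
  IntegrableOn.locallyIntegrableOn hf

lemma w_cancel {w f : ℝ × ℝ → ℝ} (hw : GoodW w) :
    (fun p => w p * ((w p)⁻¹ * f p)) =ᵐ[muO] f := by
  filter_upwards [ae_restrict_mem meas_Omega] with p hp
  have := (hw.pos p hp).ne'
  field_simp

lemma closure_memH10 {α₁ α₂ : ℝ} (hα₁ : α₁ ∈ Ioo (0:ℝ) (1/2)) (hα₂ : α₂ ∈ Ioo (0:ℝ) (1/2))
    {x : XX} (hx : x ∈ (TT (goodW_y hα₁) (goodW_x hα₂)).topologicalClosure) :
    MemH10 α₁ α₂ (fun p => x p 0) (fun p => (p.2 ^ α₁)⁻¹ * x p 1)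
      (fun p => (p.1 ^ α₂)⁻¹ * x p 2) := by
  have G₁ := goodW_y hα₁
  have G₂ := goodW_x hα₂
  refine ⟨⟨comp_memLp x 0, ⟨?_, ?_, fun φ hφ => weakX G₁ G₂ hx hφ⟩,
    ⟨?_, ?_, fun φ hφ => weakY G₁ G₂ hx hφ⟩, ?_, ?_⟩, ?_⟩
  · exact loc_int ((comp_memLp x 0).integrable (by norm_num))
  · exact loc_int (int2 G₁.inv (comp_memLp x 1))
  · exact loc_int ((comp_memLp x 0).integrable (by norm_num))
  · exact loc_int (int2 G₂.inv (comp_memLp x 2))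
  · exact (comp_memLp x 1).ae_eq (w_cancel G₁).symm
  · exact (comp_memLp x 2).ae_eq (w_cancel G₂).symm
  · intro ε hε
    obtain ⟨y, ⟨φ, hφ, rfl⟩, hy⟩ := Metric.mem_closure_iff.1 hx ε hε
    refine ⟨φ, hφ, ?_⟩
    set m := memLp_tvec hφ G₁ G₂
    have m0 : MemLp (fun p => x p 0 - φ p) 2 muO := (comp_memLp x 0).sub (test_memLp hφ 2)
    have m1 : MemLp (fun p => p.2 ^ α₁ * ((p.2 ^ α₁)⁻¹ * x p 1 - pdx φ p)) 2 muO := by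
      refine ((comp_memLp x 1).sub (test_wmemLp hφ (1,0) G₁)).ae_eq ?_
      filter_upwards [w_cancel (f := fun p => x p 1) G₁] with p hp
      simp only [Pi.sub_apply, mul_sub]
      rw [hp]; rfl
    have m2 : MemLp (fun p => p.1 ^ α₂ * ((p.1 ^ α₂)⁻¹ * x p 2 - pdy φ p)) 2 muO := by
      refine ((comp_memLp x 2).sub (test_wmemLp hφ (0,1) G₂)).ae_eq ?_
      filter_upwards [w_cancel (f := fun p => x p 2) G₂] with p hp
      simp only [Pi.sub_apply, mul_sub]
      rw [hp]; rfl
    have e : x - m.toLp _ = (memLp_v3 m0 m1 m2).toLp _ := by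
      apply Lp.ext
      filter_upwards [Lp.coeFn_sub x (m.toLp _), m.coeFn_toLp, (memLp_v3 m0 m1 m2).coeFn_toLp,
        w_cancel (f := fun p => x p 1) G₁, w_cancel (f := fun p => x p 2) G₂] with p a1 a2 a3 a4 a5
      rw [a1, a3, Pi.sub_apply, a2]
      ext i
      fin_cases i
      · simp [v3]
      · simp only [v3, mul_sub]; rw [a4]; simp
      · simp only [v3, mul_sub]; rw [a5]; simp
    rw [dist_eq_norm, e] at hy
    have n := norm_v3' m0 m1 m2
    unfold H1Norm
    rw [← n, Real.sqrt_sq (norm_nonneg _)]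
    exact hy


lemma CS {f g : ℝ × ℝ → ℝ} (hf : MemLp f 2 muO) (hg : MemLp g 2 muO) :
    |∫ p, f p * g p ∂muO| ≤ √(∫ p, f p ^ 2 ∂muO) * √(∫ p, g p ^ 2 ∂muO) := by
  have z : MemLp (fun _ : ℝ × ℝ => (0:ℝ)) 2 muO := MemLp.zero
  have h := abs_real_inner_le_norm ((memLp_v3 hf z z).toLp _) ((memLp_v3 hg z z).toLp _)
  rw [inner_v3v3] at h
  have n1 := norm_v3' hf z z
  have n2 := norm_v3' hg z z
  simp only [mul_zero, add_zero] at h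
  simp only [ne_eq, OfNat.ofNat_ne_zero, not_false_eq_true, zero_pow, integral_zero, add_zero] at n1 n2
  rw [← n1, ← n2, Real.sqrt_sq (norm_nonneg _), Real.sqrt_sq (norm_nonneg _)]
  exact h

lemma sq_bound {f g : ℝ × ℝ → ℝ} (hf : MemLp f 2 muO) (hg : MemLp g 2 muO) :
    ∫ p, f p ^ 2 ∂muO ≤ 2 * (∫ p, (f p - g p) ^ 2 ∂muO) + 2 * ∫ p, g p ^ 2 ∂muO := by
  have i1 : Integrable (fun p => (f p - g p) ^ 2) muO := (hf.sub hg).integrable_sq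
  have i2 := hg.integrable_sq
  rw [← integral_const_mul, ← integral_const_mul, ← integral_add (i1.const_mul 2) (i2.const_mul 2)]
  apply integral_mono hf.integrable_sq ((i1.const_mul 2).add (i2.const_mul 2))
  intro p
  simp only [Pi.add_apply]
  nlinarith [sq_nonneg (f p - 2 * g p)]

instance : TopologicalSpace.SeparableSpace XX := by
  haveI : Fact ((2:ENNReal) ≠ ⊤) := ⟨by simp⟩
  infer_instance

lemma weak_closure {α₁ α₂ : ℝ} (hα₁ : α₁ ∈ Ioo (0:ℝ) (1/2)) (hα₂ : α₂ ∈ Ioo (0:ℝ) (1/2))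
    {φ : ℕ → ℝ × ℝ → ℝ} (hφ : ∀ n, IsTest (φ n)) {v : ℝ × ℝ → ℝ} (hv : MemLp v 2 muO)
    {c : ℕ → ℝ} {C : ℝ} (hc : Tendsto c atTop (𝓝 C))
    (hb : ∀ n, (∫ p, (p.2 ^ α₁ * pdx (φ n) p) ^ 2 ∂muO) +
      (∫ p, (p.1 ^ α₂ * pdy (φ n) p) ^ 2 ∂muO) ≤ c n)
    (hl : Tendsto (fun n => ∫ p, (φ n p - v p) ^ 2 ∂muO) atTop (𝓝 0)) :
    ∃ u gx gy, u =ᵐ[muO] v ∧ MemH10 α₁ α₂ u gx gy ∧ a1Form α₁ α₂ u gx gy u gx gy ≤ C := by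
  have G₁ := goodW_y hα₁
  have G₂ := goodW_x hα₂
  have mx : ∀ n, MemLp (fun p : ℝ × ℝ => p.2 ^ α₁ * pdx (φ n) p) 2 muO :=
    fun n => test_wmemLp (hφ n) (1,0) G₁
  have my : ∀ n, MemLp (fun p : ℝ × ℝ => p.1 ^ α₂ * pdy (φ n) p) 2 muO :=
    fun n => test_wmemLp (hφ n) (0,1) G₂
  set x : ℕ → XX := fun n => (memLp_v3 (test_memLp (hφ n) 2) (mx n) (my n)).toLp _ with hx
  have hxT : ∀ n, x n ∈ TT G₁ G₂ := fun n => ⟨φ n, hφ n, rfl⟩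
  obtain ⟨R, hR⟩ : ∃ R, ∀ n, ‖x n‖ ≤ R := by
    have t : Tendsto (fun n => 2 * (∫ p, (φ n p - v p) ^ 2 ∂muO) + 2 * (∫ p, v p ^ 2 ∂muO) + c n)
      atTop (𝓝 (2 * 0 + 2 * (∫ p, v p ^ 2 ∂muO) + C)) :=
        ((hl.const_mul 2).add_const _).add hc
    obtain ⟨S, hS⟩ := t.bddAbove_range
    refine ⟨√S, fun n => ?_⟩
    apply Real.le_sqrt_of_sq_le
    have := norm_v3' (test_memLp (hφ n) 2) (mx n) (my n)
    rw [hx]; simp only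
    rw [this]
    have s1 := hS (mem_range_self n)
    have s2 := sq_bound (test_memLp (hφ n) 2) hv
    have s3 := hb n
    linarith
  obtain ⟨y, σ, hσ, hy⟩ := weak_subseq x R hR
  have hyT : y ∈ (TT G₁ G₂).topologicalClosure := by
    rw [← Submodule.orthogonal_orthogonal_eq_closure, Submodule.mem_orthogonal]
    intro u hu
    rw [real_inner_comm]
    refine tendsto_nhds_unique (hy u) ?_
    have : ∀ n, inner ℝ (x (σ n)) u = 0 := fun n =>
      (Submodule.mem_orthogonal _ _).1 hu _ (hxT _)
    simp [this]
  have z : MemLp (fun _ : ℝ × ℝ => (0:ℝ)) 2 muO := MemLp.zero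
  refine ⟨_, _, _, ?_, closure_memH10 hα₁ hα₂ hyT, ?_⟩
  · -- first component
    have md : MemLp (fun p => y p 0 - v p) 2 muO := (comp_memLp y 0).sub hv
    have l1 := hy ((memLp_v3 md z z).toLp _)
    rw [inner_v3] at l1
    simp only [hx, inner_v3v3] at l1
    simp only [mul_zero, add_zero] at l1
    have l2 : Tendsto (fun n => ∫ p, φ n p * (y p 0 - v p) ∂muO) atTop
        (𝓝 (∫ p, v p * (y p 0 - v p) ∂muO)) := by
      rw [tendsto_iff_norm_sub_tendsto_zero]
      have u : Tendsto (fun n => √(∫ p, (φ n p - v p) ^ 2 ∂muO) *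
          √(∫ p, (y p 0 - v p) ^ 2 ∂muO)) atTop (𝓝 0) := by
        have := (hl.sqrt).mul_const (√(∫ p, (y p 0 - v p) ^ 2 ∂muO))
        simpa using this
      refine squeeze_zero (fun n => norm_nonneg _) (fun n => ?_) u
      rw [← integral_sub (int2 (test_memLp (hφ n) 2) md) (int2 hv md)]
      have := CS (f := fun p => φ n p - v p) ((test_memLp (hφ n) 2).sub hv) md
      simp only [sub_mul] at this
      exact this
    have e := tendsto_nhds_unique l1 (l2.comp hσ.tendsto_atTop)
    have e2 : ∫ p, (y p 0 - v p) ^ 2 ∂muO = 0 := by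
      have : ∫ p, (y p 0 - v p) ^ 2 ∂muO =
        (∫ p, y p 0 * (y p 0 - v p) ∂muO) - ∫ p, v p * (y p 0 - v p) ∂muO := by
        rw [← integral_sub (int2 (comp_memLp y 0) md) (int2 hv md)]
        congr 1; ext p; ring
      rw [this, e, sub_self]
    rw [integral_eq_zero_iff_of_nonneg (fun p => sq_nonneg _) md.integrable_sq] at e2
    filter_upwards [e2] with p hp
    simp only [Pi.zero_apply] at hp
    have := pow_eq_zero_iff (two_ne_zero) |>.1 hp
    linarith
  · have my1 := comp_memLp y 1
    have my2 := comp_memLp y 2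
    have e : a1Form α₁ α₂ (fun p => y p 0) (fun p => (p.2 ^ α₁)⁻¹ * y p 1)
      (fun p => (p.1 ^ α₂)⁻¹ * y p 2) (fun p => y p 0) (fun p => (p.2 ^ α₁)⁻¹ * y p 1)
      (fun p => (p.1 ^ α₂)⁻¹ * y p 2) = ∫ p, (y p 1 * y p 1 + y p 2 * y p 2) ∂muO := by
      unfold a1Form
      apply integral_congr_ae
      filter_upwards [w_cancel (f := fun p => y p 1) G₁, w_cancel (f := fun p => y p 2) G₂] with p a4 a5
      rw [a4, a5]
    rw [e]
    set W := ∫ p, (y p 1 * y p 1 + y p 2 * y p 2) ∂muO with hW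
    have l1 := hy ((memLp_v3 z my1 my2).toLp _)
    rw [inner_v3] at l1
    simp only [hx, inner_v3v3] at l1
    simp only [mul_zero, zero_add] at l1
    rw [← hW] at l1
    have l2 : Tendsto (fun n => (1/2) * c (σ n) + (1/2) * W) atTop (𝓝 ((1/2) * C + (1/2) * W)) :=
      ((hc.comp hσ.tendsto_atTop).const_mul _).add_const _
    have : W ≤ (1/2) * C + (1/2) * W := by
      refine le_of_tendsto_of_tendsto' l1 l2 fun n => ?_
      have b := hb (σ n)
      have j1 : Integrable (fun p => (p.2 ^ α₁ * pdx (φ (σ n)) p) ^ 2) muO := (mx _).integrable_sq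
      have j2 : Integrable (fun p => (p.1 ^ α₂ * pdy (φ (σ n)) p) ^ 2) muO := (my _).integrable_sq
      have j3 : Integrable (fun p => y p 1 * y p 1 + y p 2 * y p 2) muO :=
        (int2 my1 my1).add (int2 my2 my2)
      have j4 : Integrable (fun p => (p.2 ^ α₁ * pdx (φ (σ n)) p) ^ 2 +
        (p.1 ^ α₂ * pdy (φ (σ n)) p) ^ 2) muO := j1.add j2
      rw [← integral_add j1 j2] at b
      refine le_trans ?_ (add_le_add_left (mul_le_mul_of_nonneg_left b (by norm_num)) _)
      rw [hW, ← integral_const_mul, ← integral_const_mul,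
        ← integral_add (j4.const_mul _) (j3.const_mul _)]
      refine integral_mono ((int2 (mx _) my1).add (int2 (my _) my2))
        ((j4.const_mul _).add (j3.const_mul _)) fun p => ?_
      simp only [Pi.add_apply]
      nlinarith [sq_nonneg (p.2 ^ α₁ * pdx (φ (σ n)) p - y p 1),
        sq_nonneg (p.1 ^ α₂ * pdy (φ (σ n)) p - y p 2)]
    linarith


lemma l1_bound {k g : ℝ × ℝ → ℝ} (hk : MemLp k 2 muO) (hg : MemLp g 2 muO) :
    ∫⁻ p, ‖k p * g p‖ₑ ∂muO ≤
      ENNReal.ofReal ((1/2) * (∫ p, k p ^ 2 ∂muO) + (1/2) * ∫ p, g p ^ 2 ∂muO) := by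
  have i := int2 hk hg
  rw [← ofReal_integral_norm_eq_lintegral_enorm i]
  apply ENNReal.ofReal_le_ofReal
  rw [← integral_const_mul, ← integral_const_mul,
    ← integral_add (hk.integrable_sq.const_mul _) (hg.integrable_sq.const_mul _)]
  refine integral_mono i.norm ((hk.integrable_sq.const_mul _).add (hg.integrable_sq.const_mul _))
    fun p => ?_
  simp only [Pi.add_apply, norm_mul, Real.norm_eq_abs]
  nlinarith [sq_nonneg (|k p| - |g p|), sq_abs (k p), sq_abs (g p)]

lemma lint_Omega {f : ℝ × ℝ → ℝ} (hf : ∀ p, p ∉ Omega → f p = 0) :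
    ∫⁻ p, ‖f p‖ₑ = ∫⁻ p, ‖f p‖ₑ ∂muO := by
  rw [setLIntegral_eq_of_support_subset]
  intro p hp
  by_contra h
  simp [hf p h] at hp

lemma d_bound {φ} (h : IsTest φ) (d : ℝ × ℝ) {w} (hw : GoodW w) {K : ℝ}
    (hK : ∫ p, (w p * fderiv ℝ φ p d) ^ 2 ∂muO ≤ K) :
    ∫⁻ p, ‖fderiv ℝ φ p d‖ₑ ≤ ENNReal.ofReal ((1/2) * (∫ p, (w p)⁻¹ ^ 2 ∂muO) + (1/2) * K) := by
  rw [lint_Omega (fun p hp => test_dzero h d hp)]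
  calc _ = ∫⁻ p, ‖(w p)⁻¹ * (w p * fderiv ℝ φ p d)‖ₑ ∂muO := by
        apply lintegral_congr_ae
        filter_upwards [ae_restrict_mem meas_Omega] with p hp
        have := (hw.pos p hp).ne'
        congr 1
        field_simp
    _ ≤ _ := l1_bound hw.inv (test_wmemLp h d hw)
    _ ≤ _ := by
        apply ENNReal.ofReal_le_ofReal
        linarith

lemma goodW_one : GoodW (fun _ => 1) where
  meas := measurable_const
  pos := by simp
  le := by simp
  inv := by simpa using memLp_const 1

lemma f_bound {φ} (h : IsTest φ) {K : ℝ} (hK : ∫ p, (φ p) ^ 2 ∂muO ≤ K) :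
    ∫⁻ p, ‖φ p‖ₑ ≤ ENNReal.ofReal ((1/2) * (∫ p : ℝ × ℝ, (1:ℝ) ^ 2 ∂muO) + (1/2) * K) := by
  rw [lint_Omega (fun p hp => test_zero h hp)]
  have := l1_bound (k := fun _ => 1) (memLp_const 1) (test_memLp h 2)
  simp only [one_mul] at this
  refine this.trans (ENNReal.ofReal_le_ofReal ?_)
  linarith

lemma ind_memLp (h : ℝ) (p : ℝ × ℝ) :
    MemLp (fun r => (Qs h).indicator (fun _ => (1:ℝ)) (r - p)) 2 muO := by
  have m : Measurable (fun r => (Qs h).indicator (fun _ => (1:ℝ)) (r - p)) :=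
    (measurable_const.indicator (meas_Qs h)).comp (measurable_id.sub_const p)
  refine MemLp.of_bound m.aestronglyMeasurable 1 (Eventually.of_forall fun r => ?_)
  by_cases hh : r - p ∈ Qs h <;> simp [hh]

lemma ind_int {φ} (hφ : IsTest φ) (h : ℝ) (p : ℝ × ℝ) :
    ∫ s in Qs h, φ (p + s) = ∫ r, φ r * (Qs h).indicator (fun _ => (1:ℝ)) (r - p) ∂muO := by
  have e : ∫ r, φ r * (Qs h).indicator (fun _ => (1:ℝ)) (r - p) ∂muO
      = ∫ r, φ r * (Qs h).indicator (fun _ => (1:ℝ)) (r - p) :=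
    setIntegral_eq_integral_of_forall_compl_eq_zero
      (fun r hr => by simp [test_zero hφ hr])
  rw [e, ← integral_indicator (meas_Qs h),
    ← integral_add_left_eq_self (fun r => φ r * (Qs h).indicator (fun _ => (1:ℝ)) (r - p)) p]
  congr 1; ext s
  by_cases hs : s ∈ Qs h <;> simp [hs]

lemma L1compact {α₁ α₂ : ℝ} (hα₁ : α₁ ∈ Ioo (0:ℝ) (1/2)) (hα₂ : α₂ ∈ Ioo (0:ℝ) (1/2))
    {φ : ℕ → ℝ × ℝ → ℝ} (hφ : ∀ n, IsTest (φ n)) {K : ℝ}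
    (h0 : ∀ n, ∫ p, (φ n p) ^ 2 ∂muO ≤ K)
    (hx : ∀ n, ∫ p, (p.2 ^ α₁ * pdx (φ n) p) ^ 2 ∂muO ≤ K)
    (hy : ∀ n, ∫ p, (p.1 ^ α₂ * pdy (φ n) p) ^ 2 ∂muO ≤ K) :
    ∃ (z : ℝ × ℝ → ℝ) (σ : ℕ → ℕ), StrictMono σ ∧ MemLp z 1 muO ∧
      Tendsto (fun n => eLpNorm (φ (σ n) - z) 1 muO) atTop (𝓝 0) := by
  have G₁ := goodW_y hα₁
  have G₂ := goodW_x hα₂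
  have zz : MemLp (fun _ : ℝ × ℝ => (0:ℝ)) 2 muO := MemLp.zero
  set x : ℕ → XX := fun n => (memLp_v3 (test_memLp (hφ n) 2) zz zz).toLp _ with hxd
  obtain ⟨R, hR⟩ : ∃ R, ∀ n, ‖x n‖ ≤ R := by
    refine ⟨√K, fun n => ?_⟩
    apply Real.le_sqrt_of_sq_le
    have := norm_v3' (test_memLp (hφ n) 2) zz zz
    rw [hxd]; simp only
    rw [this]
    simpa using h0 n
  obtain ⟨y, σ, hσ, hy'⟩ := weak_subseq x R hR
  set K0 : ENNReal := ENNReal.ofReal ((1/2) * (∫ p : ℝ × ℝ, (1:ℝ) ^ 2 ∂muO) + (1/2) * K) +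
    ENNReal.ofReal ((1/2) * (∫ p : ℝ × ℝ, (p.2 ^ α₁)⁻¹ ^ 2 ∂muO) + (1/2) * K) +
    ENNReal.ofReal ((1/2) * (∫ p : ℝ × ℝ, (p.1 ^ α₂)⁻¹ ^ 2 ∂muO) + (1/2) * K) with hK0
  have hc := L1cauchy (φ := fun n => φ (σ n)) (fun n => hφ _) (K := K0) (by rw [hK0]; finiteness)
    (fun n => (d_bound (hφ (σ n)) (1,0) G₁ (hx _)).trans (by
      rw [hK0, add_right_comm]; exact le_add_self))
    (fun n => (d_bound (hφ (σ n)) (0,1) G₂ (hy _)).trans (by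
      rw [hK0]; exact le_add_self))
    (fun n => (f_bound (hφ (σ n)) (h0 _)).trans (by
      rw [hK0, add_assoc]; exact le_self_add))
    (by
      intro h p
      have := hy' ((memLp_v3 (ind_memLp h p) zz zz).toLp _)
      refine ⟨_, this.congr fun n => ?_⟩
      rw [ind_int (hφ _)]
      simp only [hxd, inner_v3v3]
      simp)
  have mL : ∀ n, MemLp (φ (σ n)) 1 muO := fun n => test_memLp (hφ _) 1
  have cau : CauchySeq (fun n => (mL n).toLp (φ (σ n))) := by
    rw [EMetric.cauchySeq_iff]
    intro ε hε
    obtain ⟨δ, hδ, hδε⟩ := exists_between hε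
    obtain ⟨N, hN⟩ := hc δ hδ.ne' (hδε.trans_le le_top).ne
    refine ⟨N, fun m hm n hn => ?_⟩
    rw [Lp.edist_toLp_toLp, eLpNorm_one_eq_lintegral_enorm]
    exact (hN m hm n hn).trans_lt hδε
  obtain ⟨z, hz⟩ := cauchySeq_tendsto_of_complete cau
  refine ⟨z, σ, hσ, Lp.memLp z, ?_⟩
  rw [Lp.tendsto_Lp_iff_tendsto_eLpNorm'] at hz
  refine hz.congr fun n => eLpNorm_congr_ae ?_
  filter_upwards [(mL n).coeFn_toLp] with p hp
  simp [hp]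


lemma sq_eps {f g : ℝ × ℝ → ℝ} (hf : MemLp f 2 muO) (hg : MemLp g 2 muO) {ε : ℝ} (hε : 0 < ε) :
    ∫ p, (f p)^2 ∂muO ≤ (1+ε) * (∫ p, (g p)^2 ∂muO) + (1+1/ε) * ∫ p, (g p - f p)^2 ∂muO := by
  have i1 := hf.integrable_sq
  have i2 := hg.integrable_sq
  have i3 : Integrable (fun p => (g p - f p)^2) muO := (hg.sub hf).integrable_sq
  rw [← integral_const_mul, ← integral_const_mul, ← integral_add (i2.const_mul _) (i3.const_mul _)]
  refine integral_mono i1 ((i2.const_mul _).add (i3.const_mul _)) fun p => ?_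
  simp only [Pi.add_apply]
  have : (1+ε) * (g p)^2 + (1+1/ε) * (g p - f p)^2 - (f p)^2
      = ε * (g p + (g p - f p)/ε)^2 := by
    field_simp; ring
  have h2 : 0 ≤ ε * (g p + (g p - f p)/ε)^2 := by positivity
  linarith

lemma pdx_smul {φ} (h : IsTest φ) (c : ℝ) (p) : pdx (fun p => c * φ p) p = c * pdx φ p := by
  unfold pdx
  rw [fderiv_const_mul (h.1.differentiable (by simp) p)]; simp

lemma pdy_smul {φ} (h : IsTest φ) (c : ℝ) (p) : pdy (fun p => c * φ p) p = c * pdy φ p := by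
  unfold pdy
  rw [fderiv_const_mul (h.1.differentiable (by simp) p)]; simp

lemma normalizeU {α₁ α₂ qe M : ℝ} (hα₁ : α₁ ∈ Ioo (0:ℝ) (1/2)) (hα₂ : α₂ ∈ Ioo (0:ℝ) (1/2))
    (hq : 1 < qe) {u gx gy} (hu : MemU α₁ α₂ qe u gx gy) {ε : ℝ} (hε : 0 < ε) :
    ∃ (v φ : ℝ × ℝ → ℝ) (B C : ℝ), IsTest φ ∧ MemLp v 2 muO ∧
      MemLp v (ENNReal.ofReal (2*qe)) muO ∧ ∫ p, (v p)^2 ∂muO = 1 ∧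
      ∫ p, |v p|^(2*qe) ∂muO = C^qe ∧ 0 ≤ B ∧ 0 ≤ C ∧ B + M * C = Jfun α₁ α₂ M qe u gx gy ∧
      ∫ p, (v p - φ p)^2 ∂muO ≤ ε^2 ∧
      (∫ p, (p.2^α₁ * pdx φ p)^2 ∂muO) + (∫ p, (p.1^α₂ * pdy φ p)^2 ∂muO)
        ≤ (1+ε)*B + (ε^2+ε) := by
  obtain ⟨⟨h1, h2⟩, h3, h4⟩ := hu
  have m0 : MemLp u 2 muO := h1.memL2
  have m1 : MemLp (fun p : ℝ × ℝ => p.2 ^ α₁ * gx p) 2 muO := h1.wgx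
  have m2 : MemLp (fun p : ℝ × ℝ => p.1 ^ α₂ * gy p) 2 muO := h1.wgy
  set N := ∫ p, (u p)^2 ∂muO with hN
  have N0 : 0 < N := by
    refine lt_of_le_of_ne (integral_nonneg fun p => sq_nonneg _) fun h => h4 ?_
    have := (integral_eq_zero_iff_of_nonneg (μ := muO) (fun p => sq_nonneg (u p)) m0.integrable_sq).1 h.symm
    filter_upwards [this] with p hp
    simpa using hp
  set s := √N with hs
  have s0 : 0 < s := Real.sqrt_pos.2 N0
  have ss : s^2 = N := Real.sq_sqrt N0.le
  obtain ⟨ψ, hψ, hn⟩ := h2 (ε*s) (by positivity)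
  unfold H1Norm at hn
  rw [Real.sqrt_lt' (by positivity)] at hn
  set A := a1Form α₁ α₂ u gx gy u gx gy with hA
  have hA' : A = (∫ p, (p.2^α₁ * gx p)^2 ∂muO) + ∫ p, (p.1^α₂ * gy p)^2 ∂muO := by
    rw [hA, a1Form, ← integral_add m1.integrable_sq m2.integrable_sq]
    congr 1; ext p; ring
  set P := ∫ p, |u p|^(2*qe) ∂muO with hP
  have P0 : 0 ≤ P := integral_nonneg fun p => by positivity
  have A0 : 0 ≤ A := by
    rw [hA']; exact add_nonneg (integral_nonneg fun p => sq_nonneg _) (integral_nonneg fun p => sq_nonneg _)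
  have c2 : (s⁻¹)^2 = N⁻¹ := by rw [inv_pow, ss]
  have n0 : 0 ≤ ∫ p in Omega, (u p - ψ p)^2 := integral_nonneg fun p => sq_nonneg _
  have n1 : 0 ≤ ∫ p in Omega, (p.2 ^ α₁ * (gx p - pdx ψ p))^2 := integral_nonneg fun p => sq_nonneg _
  have n2 : 0 ≤ ∫ p in Omega, (p.1 ^ α₂ * (gy p - pdy ψ p))^2 := integral_nonneg fun p => sq_nonneg _
  have eN : (ε*s)^2 = ε^2*N := by rw [mul_pow, ss]
  refine ⟨fun p => s⁻¹ * u p, fun p => s⁻¹ * ψ p, A/N, P^(1/qe)/N, test_smul hψ _, m0.const_mul _,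
    MemLp.const_mul h3 _, ?_, ?_, by positivity, by positivity, ?_, ?_, ?_⟩
  · simp_rw [mul_pow]; rw [integral_const_mul, c2, ← hN]; field_simp
  · simp_rw [abs_mul, Real.mul_rpow (abs_nonneg _) (abs_nonneg _)]
    rw [integral_const_mul, ← hP, Real.div_rpow (by positivity) N0.le, ← Real.rpow_mul P0]
    rw [one_div_mul_cancel (by linarith), Real.rpow_one, abs_of_pos (by positivity),
      Real.rpow_mul (by positivity), Real.rpow_two, c2, Real.inv_rpow N0.le]
    field_simp
  · unfold Jfun
    change A/N + M * (P^(1/qe)/N) = (A + M * P^(1/qe))/N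
    ring
  · have : ∀ p, (s⁻¹ * u p - s⁻¹ * ψ p)^2 = (s⁻¹)^2 * (u p - ψ p)^2 := fun p => by ring
    simp_rw [this]; rw [integral_const_mul, c2, inv_mul_le_iff₀ N0]
    change _ ≤ _; rw [mul_comm N, ← eN]
    change (∫ p in Omega, (u p - ψ p)^2) ≤ _
    linarith
  · simp_rw [pdx_smul hψ, pdy_smul hψ]
    have t1 : ∀ p : ℝ × ℝ, (p.2^α₁ * (s⁻¹ * pdx ψ p))^2 = (s⁻¹)^2 * (p.2^α₁ * pdx ψ p)^2 := fun p => by ring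
    have t2 : ∀ p : ℝ × ℝ, (p.1^α₂ * (s⁻¹ * pdy ψ p))^2 = (s⁻¹)^2 * (p.1^α₂ * pdy ψ p)^2 := fun p => by ring
    simp_rw [t1, t2]
    rw [integral_const_mul, integral_const_mul, ← mul_add, c2, inv_mul_le_iff₀ N0]
    have q1 := sq_eps (f := fun p => p.2^α₁ * pdx ψ p) (test_wmemLp hψ (1,0) (goodW_y hα₁)) m1 hε
    have q2 := sq_eps (f := fun p => p.1^α₂ * pdy ψ p) (test_wmemLp hψ (0,1) (goodW_x hα₂)) m2 hε
    simp_rw [← mul_sub] at q1 q2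
    have key : (1+1/ε) * ((∫ p in Omega, (p.2 ^ α₁ * (gx p - pdx ψ p))^2) + ∫ p in Omega, (p.1 ^ α₂ * (gy p - pdy ψ p))^2)
        ≤ (1+1/ε) * (ε^2*N) := by
      gcongr; linarith
    have e1 : (1+1/ε) * (ε^2*N) = N*(ε^2+ε) := by field_simp
    have e2 : N * ((1+ε)*(A/N) + (ε^2+ε)) = (1+ε)*A + N*(ε^2+ε) := by field_simp
    rw [e2, ← e1, hA']
    calc _ ≤ _ := add_le_add q1 q2
      _ ≤ _ := by
        rw [mul_add] at key
        linarith [key]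

lemma test_memU (α₁ α₂ qe : ℝ) (hα₁ : α₁ ∈ Ioo (0:ℝ) (1/2)) (hα₂ : α₂ ∈ Ioo (0:ℝ) (1/2)) :
    ∃ u gx gy, MemU α₁ α₂ qe u gx gy := by
  obtain ⟨f, h1, h2, h3, -, h5⟩ := exists_contDiff_tsupport_subset (E := ℝ × ℝ) (n := ⊤) (s := Omega) (x := (1/2,1/2))
    (isOpen_Omega.mem_nhds (by constructor <;> constructor <;> norm_num))
  have hf : IsTest f := ⟨h3, h2, h1⟩

  obtain ⟨u, gx, gy, e, hu, -⟩ := weak_closure hα₁ hα₂ (φ := fun _ => f) (fun _ => hf) (v := f) (test_memLp hf 2)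
    (tendsto_const_nhds) (fun n => le_refl _) (by simp)
  refine ⟨u, gx, gy, hu, (memLp_congr_ae e).2 (test_memLp hf _), fun h0 => ?_⟩
  have h6 : f =ᵐ[muO] 0 := by
    filter_upwards [e, h0] with p a b
    rw [← a, b]; rfl
  have h7 : f =ᵐ[volume] (fun _ => (0:ℝ)) := by
    rw [Filter.EventuallyEq, ae_restrict_iff' meas_Omega] at h6
    filter_upwards [h6] with p hp
    by_cases h : p ∈ Omega
    · exact hp h
    · exact test_zero hf h
  have := (Continuous.ae_eq_iff_eq volume h3.continuous continuous_const).1 h7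
  rw [this] at h5; norm_num at h5


lemma pw1 {q a t : ℝ} (hq : 1 < q) (ha : 0 ≤ a) (ht : 0 < t) :
    a^2 ≤ t * a + t^(2-2*q) * a^(2*q) := by
  rcases le_or_gt a t with h | h
  · have : 0 ≤ t^(2-2*q) * a^(2*q) := by positivity
    nlinarith
  · have a0 : 0 < a := ht.trans h
    have e : t^(2-2*q) * a^(2*q) = a^2 * (t^(2*q-2))⁻¹ * a^(2*q-2) := by
      rw [← Real.rpow_neg ht.le, neg_sub]
      have : a^(2*q) = a^2 * a^(2*q-2) := by
        rw [← Real.rpow_two, ← Real.rpow_add a0]; congr 1; ring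
      rw [this]; ring
    have h2 : t^(2*q-2) ≤ a^(2*q-2) := Real.rpow_le_rpow ht.le h.le (by linarith)
    have h3 : 0 < t^(2*q-2) := by positivity
    have h4 : 1 ≤ (t^(2*q-2))⁻¹ * a^(2*q-2) := by
      rw [inv_mul_eq_div, le_div_iff₀ h3]; linarith
    rw [e, mul_assoc]
    nlinarith [sq_nonneg a, mul_pos ht a0]

lemma pw2 {r : ℝ} (hr : 0 ≤ r) (a b : ℝ) : |a - b|^r ≤ 2^r * (|a|^r + |b|^r) := by
  have h : |a - b| ≤ 2 * max |a| |b| := by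
    have := abs_sub a b
    have h1 := le_max_left |a| |b|
    have h2 := le_max_right |a| |b|
    linarith
  calc |a-b|^r ≤ (2 * max |a| |b|)^r := Real.rpow_le_rpow (abs_nonneg _) h hr
    _ = 2^r * (max |a| |b|)^r := Real.mul_rpow (by norm_num) (by positivity)
    _ ≤ _ := by
      gcongr
      rcases le_total |a| |b| with h | h
      · rw [max_eq_right h]; have : 0 ≤ |a|^r := by positivity
        linarith
      · rw [max_eq_left h]; have : 0 ≤ |b|^r := by positivity
        linarith

lemma int_rpow {q : ℝ} (hq : 1 < q) {v : ℝ × ℝ → ℝ} (hv : MemLp v (ENNReal.ofReal (2*q)) muO) :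
    Integrable (fun p => |v p|^(2*q)) muO := by
  have := hv.integrable_norm_rpow (by simp; linarith) ENNReal.ofReal_ne_top
  rw [ENNReal.toReal_ofReal (by linarith)] at this
  exact this

lemma fatou {q : ℝ} (hq : 1 < q) {v : ℕ → ℝ × ℝ → ℝ} {z : ℝ × ℝ → ℝ}
    (hv : ∀ n, MemLp (v n) (ENNReal.ofReal (2*q)) muO) (hz : MemLp z 1 muO)
    (h1 : Tendsto (fun n => eLpNorm (v n - z) 1 muO) atTop (𝓝 0)) {L : ℝ}
    (hL : Tendsto (fun n => ∫ p, |v n p|^(2*q) ∂muO) atTop (𝓝 L)) :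
    MemLp z (ENNReal.ofReal (2*q)) muO ∧ ∫ p, |z p|^(2*q) ∂muO ≤ L := by
  have hm := tendstoInMeasure_of_tendsto_eLpNorm (one_ne_zero) (fun n => (hv n).1) hz.1 h1
  obtain ⟨τ, hτ, hae⟩ := hm.exists_seq_tendsto_ae
  have q0 : 0 < 2*q := by linarith
  have L0 : 0 ≤ L := ge_of_tendsto' hL fun n => integral_nonneg fun p => by positivity
  have e1 : ∀ n, ∫⁻ p, ENNReal.ofReal (|v n p|^(2*q)) ∂muO = ENNReal.ofReal (∫ p, |v n p|^(2*q) ∂muO) := fun n =>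
    (ofReal_integral_eq_lintegral_ofReal (int_rpow hq (hv n)) (ae_of_all _ fun p => by positivity)).symm
  have mz : AEStronglyMeasurable (fun p => |z p|^(2*q)) muO :=
    ((hz.1.aemeasurable.abs).pow_const _).aestronglyMeasurable
  have key : ∫⁻ p, ENNReal.ofReal (|z p|^(2*q)) ∂muO ≤ ENNReal.ofReal L := by
    calc ∫⁻ p, ENNReal.ofReal (|z p|^(2*q)) ∂muO
        = ∫⁻ p, liminf (fun n => ENNReal.ofReal (|v (τ n) p|^(2*q))) atTop ∂muO := by
          apply lintegral_congr_ae
          filter_upwards [hae] with p hp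
          refine (Tendsto.liminf_eq ?_).symm
          exact ENNReal.tendsto_ofReal ((hp.abs).rpow_const (Or.inr q0.le))
      _ ≤ liminf (fun n => ∫⁻ p, ENNReal.ofReal (|v (τ n) p|^(2*q)) ∂muO) atTop := by
          apply lintegral_liminf_le'
          intro n
          exact (((hv (τ n)).1.aemeasurable.abs).pow_const _).ennreal_ofReal
      _ = ENNReal.ofReal L := by
          apply Tendsto.liminf_eq
          simp_rw [e1]
          exact ENNReal.tendsto_ofReal (hL.comp hτ.tendsto_atTop)
  have iz : Integrable (fun p => |z p|^(2*q)) muO := by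
    refine ⟨mz, ?_⟩
    rw [hasFiniteIntegral_iff_ofReal (ae_of_all _ fun p => by positivity)]
    exact key.trans_lt ENNReal.ofReal_lt_top
  constructor
  · rw [← integrable_norm_rpow_iff hz.1 (by simp; linarith) ENNReal.ofReal_ne_top, ENNReal.toReal_ofReal q0.le]
    exact iz
  · rw [← ofReal_integral_eq_lintegral_ofReal iz (ae_of_all _ fun p => by positivity)] at key
    exact (ENNReal.ofReal_le_ofReal_iff L0).1 key

lemma L2conv {q : ℝ} (hq : 1 < q) {v : ℕ → ℝ × ℝ → ℝ} {z : ℝ × ℝ → ℝ}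
    (hv : ∀ n, MemLp (v n) (ENNReal.ofReal (2*q)) muO) (hz : MemLp z (ENNReal.ofReal (2*q)) muO)
    (hz1 : MemLp z 1 muO)
    (h1 : Tendsto (fun n => eLpNorm (v n - z) 1 muO) atTop (𝓝 0)) {K : ℝ}
    (hK : ∀ n, ∫ p, |v n p|^(2*q) ∂muO ≤ K) :
    Tendsto (fun n => ∫ p, (v n p - z p)^2 ∂muO) atTop (𝓝 0) := by
  have q1 : (1:ENNReal) ≤ ENNReal.ofReal (2*q) := by
    rw [← ENNReal.ofReal_one]; exact ENNReal.ofReal_le_ofReal (by linarith)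
  have q2 : (2:ENNReal) ≤ ENNReal.ofReal (2*q) := by
    rw [← ENNReal.ofReal_ofNat]; exact ENNReal.ofReal_le_ofReal (by linarith)
  have hd : ∀ n, MemLp (fun p => v n p - z p) (ENNReal.ofReal (2*q)) muO := fun n => (hv n).sub hz
  have i1 : ∀ n, Integrable (fun p => |v n p - z p|) muO := fun n => ((hd n).integrable q1).abs
  have i2 : ∀ n, Integrable (fun p => (v n p - z p)^2) muO := fun n =>
    ((hd n).mono_exponent q2).integrable_sq
  have iz := int_rpow hq hz
  set K' := 2^(2*q) * (K + ∫ p, |z p|^(2*q) ∂muO) with hK'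
  have bK : ∀ n, ∫ p, |v n p - z p|^(2*q) ∂muO ≤ K' := fun n => by
    calc _ ≤ ∫ p, 2^(2*q) * (|v n p|^(2*q) + |z p|^(2*q)) ∂muO :=
          integral_mono (int_rpow hq (hd n)) (((int_rpow hq (hv n)).add iz).const_mul _)
            fun p => pw2 (by linarith) _ _
      _ = 2^(2*q) * ((∫ p, |v n p|^(2*q) ∂muO) + ∫ p, |z p|^(2*q) ∂muO) := by
          rw [integral_const_mul, integral_add (int_rpow hq (hv n)) iz]
      _ ≤ _ := by rw [hK']; gcongr; exact hK n
  have D : Tendsto (fun n => ∫ p, |v n p - z p| ∂muO) atTop (𝓝 0) := by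
    have := (ENNReal.tendsto_toReal ENNReal.zero_ne_top).comp h1
    refine this.congr fun n => ?_
    rw [Function.comp_apply, eLpNorm_one_eq_lintegral_enorm,
      ← integral_norm_eq_lintegral_enorm ((hv n).1.sub hz1.1)]
    rfl
  have main : ∀ t > 0, ∀ n, ∫ p, (v n p - z p)^2 ∂muO ≤ t * (∫ p, |v n p - z p| ∂muO) + t^(2-2*q) * K' := by
    intro t ht n
    calc _ ≤ ∫ p, (t * |v n p - z p| + t^(2-2*q) * |v n p - z p|^(2*q)) ∂muO :=
          integral_mono (i2 n) (((i1 n).const_mul _).add ((int_rpow hq (hd n)).const_mul _))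
            fun p => by
              have := pw1 hq (abs_nonneg (v n p - z p)) ht
              rwa [sq_abs] at this
      _ = t * (∫ p, |v n p - z p| ∂muO) + t^(2-2*q) * ∫ p, |v n p - z p|^(2*q) ∂muO := by
          rw [integral_add ((i1 n).const_mul _) ((int_rpow hq (hd n)).const_mul _),
            integral_const_mul, integral_const_mul]
      _ ≤ _ := by gcongr; exact bK n
  rw [Metric.tendsto_atTop]
  intro δ hδ
  have T : Tendsto (fun t : ℝ => t^(2-2*q) * K') atTop (𝓝 0) := by
    have := (tendsto_rpow_neg_atTop (show 0 < 2*q-2 by linarith)).mul_const K'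
    simpa using this
  obtain ⟨t, ht, ht0⟩ := ((T.eventually (gt_mem_nhds (half_pos hδ))).and (eventually_gt_atTop 0)).exists
  have T2 : Tendsto (fun n => t * ∫ p, |v n p - z p| ∂muO) atTop (𝓝 0) := by
    simpa using D.const_mul t
  obtain ⟨n0, hn0⟩ := eventually_atTop.1 (T2.eventually (gt_mem_nhds (half_pos hδ)))
  refine ⟨n0, fun n hn => ?_⟩
  rw [Real.dist_0_eq_abs, abs_of_nonneg (integral_nonneg fun p => sq_nonneg _)]
  linarith [main t ht0 n, hn0 n hn]

def fe (ε t : ℝ) : ℝ := √(t^2+ε^2) - ε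

lemma fe_smooth {ε : ℝ} (hε : 0 < ε) : ContDiff ℝ (⊤ : ℕ∞) (fe ε) := by
  unfold fe
  refine ContDiff.sub (ContDiff.sqrt (by fun_prop) fun x => by positivity) contDiff_const

lemma fe_zero {ε : ℝ} (hε : 0 < ε) : fe ε 0 = 0 := by
  simp [fe, Real.sqrt_sq hε.le]

lemma fe_near {ε : ℝ} (hε : 0 < ε) (t : ℝ) : |fe ε t - (|t|)| ≤ ε := by
  have h1 : |t| ≤ √(t^2+ε^2) := by
    apply Real.le_sqrt_of_sq_le; rw [sq_abs]; nlinarith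
  have h2 : √(t^2+ε^2) ≤ |t| + ε := by
    apply Real.sqrt_le_iff.2 ⟨by positivity, ?_⟩
    rw [← sq_abs t]; nlinarith [abs_nonneg t]
  rw [abs_le]; unfold fe; constructor <;> linarith

lemma fe_deriv {ε : ℝ} (hε : 0 < ε) (t : ℝ) : |deriv (fe ε) t| ≤ 1 := by
  have h : HasDerivAt (fe ε) ((2*t) / (2 * √(t^2+ε^2))) t := by
    have : HasDerivAt (fun t : ℝ => t^2+ε^2) (2*t) t := by
      simpa using (hasDerivAt_pow 2 t).add_const (ε^2)
    exact (this.sqrt (by positivity)).sub_const ε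
  have h1 : |t| ≤ √(t^2+ε^2) := by
    apply Real.le_sqrt_of_sq_le; rw [sq_abs]; nlinarith
  rw [h.deriv, abs_div, abs_of_pos (show 0 < 2 * √(t^2+ε^2) by positivity), div_le_one (by positivity), abs_mul, abs_two]
  linarith

lemma fe_pd {ε : ℝ} (hε : 0 < ε) {φ} (h : IsTest φ) (d p : ℝ × ℝ) (w : ℝ) :
    (w * fderiv ℝ (fun p => fe ε (φ p)) p d)^2 ≤ (w * fderiv ℝ φ p d)^2 := by
  have h1 : HasFDerivAt φ (fderiv ℝ φ p) p := (h.1.differentiable (by simp) p).hasFDerivAt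
  have h2 : HasDerivAt (fe ε) (deriv (fe ε) (φ p)) (φ p) := ((fe_smooth hε).differentiable (by simp) _).hasDerivAt
  have h3 := (h2.comp_hasFDerivAt p h1).fderiv
  have h4 : fderiv ℝ (fun p => fe ε (φ p)) p = deriv (fe ε) (φ p) • fderiv ℝ φ p := h3
  rw [h4]
  simp only [FunLike.coe_smul, Pi.smul_apply, smul_eq_mul]
  have h5 := fe_deriv hε (φ p)
  have h6 : (deriv (fe ε) (φ p))^2 ≤ 1 := (sq_le_one_iff_abs_le_one _).2 h5
  have : (w * (deriv (fe ε) (φ p) * fderiv ℝ φ p d))^2 = (deriv (fe ε) (φ p))^2 * (w * fderiv ℝ φ p d)^2 := by ring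
  rw [this]
  nlinarith [sq_nonneg (w * fderiv ℝ φ p d)]


lemma eL1 {f : ℝ × ℝ → ℝ} (hf : MemLp f 2 muO) {ε : ℝ} (hε : 0 < ε) (h : ∫ p, (f p)^2 ∂muO ≤ ε^2) :
    eLpNorm f 1 muO ≤ ENNReal.ofReal ε := by
  have i : Integrable f muO := hf.integrable (by norm_num)
  rw [eLpNorm_one_eq_lintegral_enorm, ← ofReal_integral_norm_eq_lintegral_enorm i]
  apply ENNReal.ofReal_le_ofReal
  have := CS (f := fun p => |f p|) (g := fun _ => 1) hf.abs (memLp_const 1)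
  have h1 : (∫ p : ℝ × ℝ, (1:ℝ)^2 ∂muO) = 1 := by
    simp [Measure.real, vol_Omega]
  simp only [h1, sq_abs, mul_one, Real.sqrt_one] at this
  calc ∫ p, ‖f p‖ ∂muO ≤ |∫ p, |f p| ∂muO| := le_abs_self _
    _ ≤ _ := this
    _ ≤ ε := by rw [Real.sqrt_le_iff]; exact ⟨hε.le, h⟩

lemma min_seq {α₁ α₂ qe M : ℝ} (hα₁ : α₁ ∈ Ioo (0:ℝ) (1/2)) (hα₂ : α₂ ∈ Ioo (0:ℝ) (1/2))
    (hq : 1 < qe) (hM : 0 < M) :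
    ∃ (m B C K : ℝ) (ε b c : ℕ → ℝ) (v φ : ℕ → ℝ × ℝ → ℝ),
      (∀ u gx gy, MemU α₁ α₂ qe u gx gy → m ≤ Jfun α₁ α₂ M qe u gx gy) ∧ B + M * C = m ∧ 0 ≤ C ∧
      (∀ n, 0 < ε n) ∧ (∀ n, ε n ≤ 1) ∧ Tendsto ε atTop (𝓝 0) ∧
      Tendsto b atTop (𝓝 B) ∧ Tendsto c atTop (𝓝 C) ∧ (∀ n, b n ≤ K) ∧ (∀ n, 0 ≤ b n) ∧
      (∀ n, c n ≤ K) ∧ (∀ n, 0 ≤ c n) ∧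
      (∀ n, IsTest (φ n)) ∧ (∀ n, MemLp (v n) 2 muO) ∧
      (∀ n, MemLp (v n) (ENNReal.ofReal (2*qe)) muO) ∧ (∀ n, ∫ p, (v n p)^2 ∂muO = 1) ∧
      (∀ n, ∫ p, |v n p|^(2*qe) ∂muO = (c n)^qe) ∧
      (∀ n, ∫ p, (v n p - φ n p)^2 ∂muO ≤ (ε n)^2) ∧
      (∀ n, (∫ p, (p.2^α₁ * pdx (φ n) p)^2 ∂muO) + (∫ p, (p.1^α₂ * pdy (φ n) p)^2 ∂muO)
        ≤ (1+ε n)*b n + ((ε n)^2+ε n)) := by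
  set S : Set ℝ := {r | ∃ u gx gy, MemU α₁ α₂ qe u gx gy ∧ r = Jfun α₁ α₂ M qe u gx gy} with hS
  have S1 : S.Nonempty := by
    obtain ⟨u, gx, gy, h⟩ := test_memU α₁ α₂ qe hα₁ hα₂
    exact ⟨_, u, gx, gy, h, rfl⟩
  have S2 : BddBelow S := by
    refine ⟨0, ?_⟩
    rintro r ⟨u, gx, gy, h, rfl⟩
    obtain ⟨v, φ, B, C, -, -, -, -, -, hB, hC, e, -⟩ := normalizeU (M := M) hα₁ hα₂ hq h one_pos
    rw [← e]; positivity
  obtain ⟨j, ja, jt, jS⟩ := exists_seq_tendsto_sInf S1 S2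
  choose u gx gy hU hj using jS
  have e0 : ∀ n : ℕ, 0 < 1/((n:ℝ)+1) := fun n => Nat.one_div_pos_of_nat
  choose v φ b c h1 h2 h3 h4 h5 h6 h7 h8 h9 h10 using fun n => normalizeU (M := M) hα₁ hα₂ hq (hU n) (e0 n)
  have bj : ∀ n, b n + M * c n ≤ j 0 := fun n => by
    rw [h8, ← hj]; exact ja (Nat.zero_le n)
  have bb : ∀ n, b n ≤ j 0 := fun n => by
    have := mul_nonneg hM.le (h7 n); linarith [bj n]
  have cc : ∀ n, c n ≤ j 0 / M := fun n => by
    rw [le_div_iff₀ hM]; linarith [bj n, h6 n]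
  have comp : IsCompact (Icc (0:ℝ) (j 0) ×ˢ Icc (0:ℝ) (j 0 / M)) := isCompact_Icc.prod isCompact_Icc
  obtain ⟨⟨B, C⟩, hBC, σ, hσ, ht⟩ := comp.tendsto_subseq (x := fun n => (b n, c n))
    (fun n => ⟨⟨h6 n, bb n⟩, ⟨h7 n, cc n⟩⟩)
  have tb : Tendsto (b ∘ σ) atTop (𝓝 B) := (continuous_fst.tendsto _).comp ht
  have tc : Tendsto (c ∘ σ) atTop (𝓝 C) := (continuous_snd.tendsto _).comp ht
  refine ⟨sInf S, B, C, max (j 0) (j 0 / M), fun n => 1/((σ n:ℝ)+1), b ∘ σ, c ∘ σ, v ∘ σ, φ ∘ σ,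
    fun u gx gy h => csInf_le S2 ⟨u, gx, gy, h, rfl⟩, ?_, hBC.2.1, fun n => e0 _, fun n => ?_, ?_, tb, tc,
    fun n => (bb _).trans (le_max_left _ _), fun n => h6 _, fun n => (cc _).trans (le_max_right _ _),
    fun n => h7 _, fun n => h1 _, fun n => h2 _, fun n => h3 _, fun n => h4 _, fun n => h5 _, fun n => h9 _, fun n => h10 _⟩
  · refine tendsto_nhds_unique (tb.add (tc.const_mul M)) ?_
    refine (jt.comp hσ.tendsto_atTop).congr fun n => ?_
    simp only [Function.comp]
    rw [h8, ← hj]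
  · rw [div_le_one (by positivity)]
    have : (0:ℝ) ≤ σ n := Nat.cast_nonneg _
    linarith
  · exact tendsto_one_div_add_atTop_nhds_zero_nat.comp hσ.tendsto_atTop

lemma main_aux {α₁ α₂ qe M : ℝ} (hα₁ : α₁ ∈ Ioo (0:ℝ) (1/2)) (hα₂ : α₂ ∈ Ioo (0:ℝ) (1/2))
    (hq : 1 < qe) (hM : 0 < M) :
    ∃ z zx zy : ℝ × ℝ → ℝ, MemU α₁ α₂ qe z zx zy ∧
      (∀ᵐ p ∂(volume.restrict Omega), 0 ≤ z p) ∧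
      (∀ u gx gy : ℝ × ℝ → ℝ, MemU α₁ α₂ qe u gx gy →
        Jfun α₁ α₂ M qe z zx zy ≤ Jfun α₁ α₂ M qe u gx gy) := by
  obtain ⟨m, B, C, K, ε, b, c, v, φ, hm, hBC, C0, e0, e1, et, bt, ct, bK, b0, cK, c0, hφ, hv, hvq,
    hv1, hvc, hvφ, hφd⟩ := min_seq (M := M) hα₁ hα₂ hq hM
  have q0 : 0 < qe := by linarith
  have K0 : 0 ≤ K := (b0 0).trans (bK 0)
  have hφ2 : ∀ n, MemLp (φ n) 2 muO := fun n => test_memLp (hφ n) 2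
  have ee : ∀ n, (ε n)^2 ≤ 1 := fun n => by nlinarith [e0 n, e1 n]
  have bd : ∀ n, (1+ε n)*b n + ((ε n)^2+ε n) ≤ 2*K+4 := fun n => by
    nlinarith [mul_le_mul (e1 n) (bK n) (b0 n) zero_le_one, ee n, e1 n, bK n]
  have p1 : ∀ n, 0 ≤ ∫ p, (p.2^α₁ * pdx (φ n) p)^2 ∂muO := fun n => integral_nonneg fun p => sq_nonneg _
  have p2 : ∀ n, 0 ≤ ∫ p, (p.1^α₂ * pdy (φ n) p)^2 ∂muO := fun n => integral_nonneg fun p => sq_nonneg _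
  obtain ⟨z, σ, hσ, hz1, hzt⟩ := L1compact hα₁ hα₂ hφ (K := 2*K+4)
    (fun n => by
      have := sq_bound (hφ2 n) (hv n)
      have s : ∫ p, (φ n p - v n p)^2 ∂muO = ∫ p, (v n p - φ n p)^2 ∂muO := by
        congr 1; ext p; ring
      rw [s, hv1] at this
      linarith [hvφ n, ee n])
    (fun n => by linarith [hφd n, bd n, p2 n])
    (fun n => by linarith [hφd n, bd n, p1 n])
  have et' : Tendsto (fun n => ε (σ n)) atTop (𝓝 0) := et.comp hσ.tendsto_atTop
  have hvz : Tendsto (fun n => eLpNorm (v (σ n) - z) 1 muO) atTop (𝓝 0) := by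
    have t : Tendsto (fun n => ENNReal.ofReal (ε (σ n)) + eLpNorm (φ (σ n) - z) 1 muO) atTop (𝓝 0) := by
      have := (ENNReal.tendsto_ofReal et').add hzt
      simpa using this
    refine tendsto_of_tendsto_of_tendsto_of_le_of_le tendsto_const_nhds t (fun _ => bot_le) fun n => ?_
    have e : v (σ n) - z = (v (σ n) - φ (σ n)) + (φ (σ n) - z) := by abel
    simp only
    rw [e]
    refine (eLpNorm_add_le ((hv _).1.sub (hφ2 _).1) ((hφ2 _).1.sub hz1.1) le_rfl).trans ?_
    gcongr
    exact eL1 ((hv _).sub (hφ2 _)) (e0 _) (hvφ _)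
  have ctq : Tendsto (fun n => ∫ p, |v (σ n) p|^(2*qe) ∂muO) atTop (𝓝 (C^qe)) := by
    simp_rw [hvc]
    exact (ct.comp hσ.tendsto_atTop).rpow_const (Or.inr q0.le)
  obtain ⟨hzq, hzC⟩ := fatou hq (fun n => hvq (σ n)) hz1 hvz ctq
  have L2 := L2conv hq (fun n => hvq (σ n)) hzq hz1 hvz (K := K^qe) (fun n => by
    rw [hvc]; exact Real.rpow_le_rpow (c0 _) (cK _) q0.le)
  have q2 : (2:ENNReal) ≤ ENNReal.ofReal (2*qe) := by
    rw [← ENNReal.ofReal_ofNat]; exact ENNReal.ofReal_le_ofReal (by linarith)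
  have hz2 : MemLp z 2 muO := hzq.mono_exponent q2
  have Z1 : 1 ≤ ∫ p, (z p)^2 ∂muO := by
    -- from (1+δ) ∫ z² + (1+1/δ) ∫ (z - v)² ≥ 1
    have k : ∀ δ > 0, 1 ≤ (1+δ) * ∫ p, (z p)^2 ∂muO := fun δ hδ => by
      have t : Tendsto (fun n => (1+δ) * (∫ p, (z p)^2 ∂muO) + (1+1/δ) * ∫ p, (v (σ n) p - z p)^2 ∂muO)
          atTop (𝓝 ((1+δ) * (∫ p, (z p)^2 ∂muO) + (1+1/δ) * 0)) := tendsto_const_nhds.add (L2.const_mul _)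
      rw [mul_zero, add_zero] at t
      refine ge_of_tendsto' t fun n => ?_
      have := sq_eps (hv (σ n)) hz2 hδ
      rw [hv1] at this
      have s : ∫ p, (z p - v (σ n) p)^2 ∂muO = ∫ p, (v (σ n) p - z p)^2 ∂muO := by
        congr 1; ext p; ring
      rwa [s] at this
    have t : Tendsto (fun δ : ℝ => (1+δ) * ∫ p, (z p)^2 ∂muO) (𝓝[>] 0) (𝓝 ((1+0) * ∫ p, (z p)^2 ∂muO)) :=
      ((continuous_const.add continuous_id).mul continuous_const).continuousAt.tendsto.mono_left nhdsWithin_le_nhds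
    have := ge_of_tendsto t (eventually_mem_nhdsWithin.mono fun δ hδ => k δ hδ)
    simpa using this
  set w : ℕ → ℝ × ℝ → ℝ := fun n p => fe (ε (σ n)) (φ (σ n) p) with hw
  have wt : ∀ n, IsTest (w n) := fun n => test_comp (hφ _) (fe_smooth (e0 _)) (fe_zero (e0 _))
  have hwz : Tendsto (fun n => ∫ p, (w n p - |z p|)^2 ∂muO) atTop (𝓝 0) := by
    have t : Tendsto (fun n => 3 * (ε (σ n))^2 + 3 * (∫ p, (v (σ n) p - z p)^2 ∂muO) + 3 * (ε (σ n))^2) atTop (𝓝 0) := by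
      have := ((et'.pow 2).const_mul 3 |>.add (L2.const_mul 3)).add ((et'.pow 2).const_mul 3)
      simpa using this
    refine tendsto_of_tendsto_of_tendsto_of_le_of_le tendsto_const_nhds t
      (fun _ => integral_nonneg fun p => sq_nonneg _) fun n => ?_
    have i1 : Integrable (fun p => (v (σ n) p - φ (σ n) p)^2) muO := ((hv _).sub (hφ2 _)).integrable_sq
    have i2 : Integrable (fun p => (v (σ n) p - z p)^2) muO := ((hv _).sub hz2).integrable_sq
    have i3 : Integrable (fun p => (w n p - |z p|)^2) muO := ((test_memLp (wt n) 2).sub hz2.abs).integrable_sq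
    have i4 : Integrable (fun _ : ℝ × ℝ => (ε (σ n))^2) muO := integrable_const _
    calc ∫ p, (w n p - |z p|)^2 ∂muO
        ≤ ∫ p, (3 * (v (σ n) p - φ (σ n) p)^2 + 3 * (v (σ n) p - z p)^2 + 3 * (ε (σ n))^2) ∂muO := by
          refine integral_mono i3 (((i1.const_mul 3).add (i2.const_mul 3)).add (i4.const_mul 3)) fun p => ?_
          simp only [hw]
          have a1 := fe_near (e0 (σ n)) (φ (σ n) p)
          have a2 := abs_abs_sub_abs_le_abs_sub (φ (σ n) p) (z p)
          set X := fe (ε (σ n)) (φ (σ n) p) - |φ (σ n) p|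
          set Y := |φ (σ n) p| - |z p|
          have a3 : fe (ε (σ n)) (φ (σ n) p) - |z p| = X + Y := by ring
          rw [a3]
          have a4 : X^2 ≤ (ε (σ n))^2 := sq_le_sq' (by linarith [(abs_le.1 a1).1]) (abs_le.1 a1).2
          have a5 : Y^2 ≤ (φ (σ n) p - z p)^2 := sq_le_sq.2 a2
          set s := v (σ n) p - φ (σ n) p
          set r := v (σ n) p - z p
          have a6 : φ (σ n) p - z p = r - s := by ring
          rw [a6] at a5
          have a7 : (X+Y)^2 ≤ 3 * X^2 + (3/2) * Y^2 := by nlinarith [sq_nonneg (2*X-Y)]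
          nlinarith [sq_nonneg (r+s)]
      _ = 3 * (∫ p, (v (σ n) p - φ (σ n) p)^2 ∂muO) + 3 * (∫ p, (v (σ n) p - z p)^2 ∂muO) + 3 * (ε (σ n))^2 := by
          have i5 : Integrable (fun p => 3 * (v (σ n) p - φ (σ n) p)^2 + 3 * (v (σ n) p - z p)^2) muO :=
            (i1.const_mul 3).add (i2.const_mul 3)
          rw [integral_add i5 (i4.const_mul 3),
            integral_add (i1.const_mul 3) (i2.const_mul 3), integral_const_mul, integral_const_mul]
          simp [Measure.real, vol_Omega]
      _ ≤ _ := by linarith [hvφ (σ n)]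
  have hbt : Tendsto (fun n => (1+ε (σ n))*b (σ n) + ((ε (σ n))^2+ε (σ n))) atTop (𝓝 B) := by
    have := ((et'.const_add 1).mul (bt.comp hσ.tendsto_atTop)).add ((et'.pow 2).add et')
    simpa using this
  obtain ⟨Z, gx, gy, eZ, HZ, aZ⟩ := weak_closure hα₁ hα₂ wt (v := fun p => |z p|) hz2.abs hbt
    (fun n => by
      refine le_trans (add_le_add ?_ ?_) (hφd (σ n))
      · exact integral_mono (test_wmemLp (wt n) (1,0) (goodW_y hα₁)).integrable_sq
          (test_wmemLp (hφ (σ n)) (1,0) (goodW_y hα₁)).integrable_sq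
          fun p => fe_pd (e0 _) (hφ _) (1,0) p _
      · exact integral_mono (test_wmemLp (wt n) (0,1) (goodW_x hα₂)).integrable_sq
          (test_wmemLp (hφ (σ n)) (0,1) (goodW_x hα₂)).integrable_sq
          fun p => fe_pd (e0 _) (hφ _) (0,1) p _) hwz
  have I2 : ∫ p, (Z p)^2 ∂muO = ∫ p, (z p)^2 ∂muO :=
    integral_congr_ae (by filter_upwards [eZ] with p hp; rw [hp, sq_abs])
  have Iq : ∫ p, |Z p|^(2*qe) ∂muO = ∫ p, |z p|^(2*qe) ∂muO :=
    integral_congr_ae (by filter_upwards [eZ] with p hp; rw [hp, abs_abs])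
  refine ⟨Z, gx, gy, ⟨HZ, (memLp_congr_ae eZ).2 hzq.abs, fun h => ?_⟩, ?_, fun u ux uy hu => ?_⟩
  · have : ∫ p, (Z p)^2 ∂muO = 0 := by
      rw [integral_congr_ae (g := fun _ => (0:ℝ)) (by filter_upwards [h] with p hp; simp [hp])]; simp
    linarith
  · filter_upwards [eZ] with p hp
    rw [hp]; exact abs_nonneg _
  · refine le_trans ?_ (hm u ux uy hu)
    unfold Jfun
    change (_ + M * (∫ p, |Z p|^(2*qe) ∂muO)^(1/qe)) / (∫ p, (Z p)^2 ∂muO) ≤ m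
    rw [I2, Iq]
    have P0 : 0 ≤ ∫ p, |z p|^(2*qe) ∂muO := integral_nonneg fun p => by positivity
    have h1 : (∫ p, |z p|^(2*qe) ∂muO)^(1/qe) ≤ C := by
      calc _ ≤ (C^qe)^(1/qe) := Real.rpow_le_rpow P0 hzC (by positivity)
        _ = C := by rw [← Real.rpow_mul C0, mul_one_div_cancel q0.ne', Real.rpow_one]
    have B0 : 0 ≤ B := ge_of_tendsto' bt b0
    rw [div_le_iff₀ (by linarith)]
    have h2 := mul_le_mul_of_nonneg_left h1 hM.le
    have m0 : 0 ≤ m := by rw [← hBC]; positivity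
    nlinarith



/-- The functional `J` attains its minimum over
`U = (𝓗₀¹(Ω) ∩ L^{2q}(Ω)) \ {0}`, and the minimizer can be chosen nonnegative
a.e. on `Ω`. -/
theorem J_attains_minimum (α₁ α₂ ppow qe M : ℝ)
    (hα₁ : α₁ ∈ Ioo (0:ℝ) (1/2)) (hα₂ : α₂ ∈ Ioo (0:ℝ) (1/2))
    (hp : 1 < ppow) (hq : qe = ppow / (ppow - 1)) (hM : 0 < M) :
    ∃ z zx zy : ℝ × ℝ → ℝ, MemU α₁ α₂ qe z zx zy ∧
      (∀ᵐ p ∂(volume.restrict Omega), 0 ≤ z p) ∧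
      (∀ u gx gy : ℝ × ℝ → ℝ, MemU α₁ α₂ qe u gx gy →
        Jfun α₁ α₂ M qe z zx zy ≤ Jfun α₁ α₂ M qe u gx gy) := by
  have hp' : 0 < ppow - 1 := by linarith
  have hq1 : 1 < qe := by
    rw [hq, lt_div_iff₀ hp']; linarith
  exact main_aux hα₁ hα₂ hq1 hM
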